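/- arXiv:1006.2296 — 6 statements merged into one kernel-verified Lean document; each statement's English description precedes it below -/
import Mathlib

section
/- (Herman–Marco–Sauzin coupling lemma) Let m, m' ≥ 1, let F : 𝔸^m → 𝔸^m and G : 𝔸^{m'} → 𝔸^{m'} be maps, and let f : 𝔸^m → ℝ and g : 𝔸^{m'} → ℝ be C² Hamiltonian functions generating complete Hamiltonian vector fields. Suppose there is a point a ∈ 𝔸^{m'} which is q-periodic for G (i.e. G^q(a) = a) and such that the synchronization conditions hold: g(a) = 1, dg(a) = 0, and g(G^k(a)) = 0, dg(G^k(a)) = 0 for all 1 ≤ k ≤ q−1. Then the Hamiltonian vector field of f ⊗ g is complete, the map Ψ = Φ^{f⊗g} ∘ (F × G) : 𝔸^{m+m'} → 𝔸^{m+m'} is well defined, and for every x ∈ 𝔸^m one has Ψ^q(x, a) = (Φ^f(F^q(x)), a). -/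
open scoped BigOperators
open Real

noncomputable section

/-- The circle `𝕋 = ℝ/ℤ`. -/
abbrev T1 := AddCircle (1 : ℝ)

instance : Fact ((0 : ℝ) < 1) := ⟨one_pos⟩

/-- The annulus `𝔸^N = 𝕋^N × ℝ^N` with angle-action coordinates. -/
abbrev Ann (N : ℕ) := (Fin N → T1) × (Fin N → ℝ)

/-- Projection of the universal cover `ℝ^N × ℝ^N` onto the annulus `𝔸^N`. -/
noncomputable def projAnn (N : ℕ) : ((Fin N → ℝ) × (Fin N → ℝ)) → Ann N :=
  fun x => (fun i => (x.1 i : T1), x.2)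

/-- `Φ` is the complete flow of the Hamiltonian `H` on the annulus `𝔸^N`: it is a
one-parameter family of maps whose orbits lift to curves on the universal cover solving
Hamilton's equations `θ' = ∂H/∂I`, `I' = −∂H/∂θ`.  `Φ 1` is the time-one map `Φ^H`. -/
def IsHamFlow (N : ℕ) (H : Ann N → ℝ) (Φ : ℝ → Ann N → Ann N) : Prop :=
  (∀ x, Φ 0 x = x) ∧ (∀ s t : ℝ, ∀ x, Φ (s + t) x = Φ s (Φ t x)) ∧
    ∀ x : Ann N, ∃ c : ℝ → (Fin N → ℝ) × (Fin N → ℝ),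
      (∀ t, projAnn N (c t) = Φ t x) ∧
      ∀ t : ℝ, ∀ i : Fin N,
        HasDerivAt (fun s => (c s).1 i)
          (fderiv ℝ (H ∘ projAnn N) (c t) ((0 : Fin N → ℝ), Pi.single i 1)) t ∧
        HasDerivAt (fun s => (c s).2 i)
          (-(fderiv ℝ (H ∘ projAnn N) (c t) (Pi.single i 1, (0 : Fin N → ℝ)))) t

/-- `Φ` is the complete flow of the Hamiltonian `H` on the product annulus
`𝔸^M × 𝔸^{M'} ≅ 𝔸^{M+M'}`, defined through lifts to the universal cover. -/
def IsHamFlowProd (M M' : ℕ) (H : Ann M × Ann M' → ℝ)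
    (Φ : ℝ → Ann M × Ann M' → Ann M × Ann M') : Prop :=
  (∀ x, Φ 0 x = x) ∧ (∀ s t : ℝ, ∀ x, Φ (s + t) x = Φ s (Φ t x)) ∧
    ∀ x : Ann M × Ann M',
      ∃ c : ℝ → ((Fin M → ℝ) × (Fin M → ℝ)) × ((Fin M' → ℝ) × (Fin M' → ℝ)),
        (∀ t, (projAnn M (c t).1, projAnn M' (c t).2) = Φ t x) ∧
        ∀ t : ℝ,
          (∀ i : Fin M,
            HasDerivAt (fun s => (c s).1.1 i)
              (fderiv ℝ (fun y => H (projAnn M y.1, projAnn M' y.2)) (c t)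
                (((0 : Fin M → ℝ), Pi.single i 1), 0)) t ∧
            HasDerivAt (fun s => (c s).1.2 i)
              (-(fderiv ℝ (fun y => H (projAnn M y.1, projAnn M' y.2)) (c t)
                ((Pi.single i 1, (0 : Fin M → ℝ)), 0))) t) ∧
          (∀ j : Fin M',
            HasDerivAt (fun s => (c s).2.1 j)
              (fderiv ℝ (fun y => H (projAnn M y.1, projAnn M' y.2)) (c t)
                (0, ((0 : Fin M' → ℝ), Pi.single j 1))) t ∧
            HasDerivAt (fun s => (c s).2.2 j)
              (-(fderiv ℝ (fun y => H (projAnn M y.1, projAnn M' y.2)) (c t)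
                (0, (Pi.single j 1, (0 : Fin M' → ℝ))))) t)

/-- Uniqueness of solutions of an autonomous `C¹` ODE. -/
theorem ode_unique_aux {E : Type*} [NormedAddCommGroup E] [NormedSpace ℝ E]
    (X : E → E) (hX : ContDiff ℝ 1 X) (c d : ℝ → E)
    (hc : ∀ t, HasDerivAt c (X (c t)) t) (hd : ∀ t, HasDerivAt d (X (d t)) t)
    (h0 : c 0 = d 0) : c 1 = d 1 := by
  have hcc : Continuous c := continuous_iff_continuousAt.2 fun t => (hc t).continuousAt
  have hdc : Continuous d := continuous_iff_continuousAt.2 fun t => (hd t).continuousAt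
  let s : Set E := c '' Set.Icc 0 1 ∪ d '' Set.Icc 0 1
  have hs : IsCompact s := (isCompact_Icc.image hcc).union (isCompact_Icc.image hdc)
  obtain ⟨K, hK⟩ := LocallyLipschitzOn.exists_lipschitzOnWith_of_compact hs
    (hX.locallyLipschitz.locallyLipschitzOn (s := s))
  exact ODE_solution_unique_of_mem_Icc_right (v := fun _ => X) (s := fun _ => s) (K := K)
    (fun t _ => hK) hcc.continuousOn (fun t _ => (hc t).hasDerivWithinAt)
    (fun t ht => Or.inl ⟨t, ⟨ht.1, ht.2.le⟩, rfl⟩)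
    hdc.continuousOn (fun t _ => (hd t).hasDerivWithinAt)
    (fun t ht => Or.inr ⟨t, ⟨ht.1, ht.2.le⟩, rfl⟩) h0 ⟨zero_le_one, le_rfl⟩

theorem projAnn_surj_aux (N : ℕ) (x : Ann N) : ∃ y, projAnn N y = x := by
  choose u hu using fun i => QuotientAddGroup.mk_surjective (x.1 i)
  exact ⟨(u, x.2), Prod.ext (funext hu) rfl⟩

/-- Orbits can be lifted from any lift of the initial point. -/
theorem lift_aux (N : ℕ) (H : Ann N → ℝ) (Φ : ℝ → Ann N → Ann N) (hΦ : IsHamFlow N H Φ)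
    (y : (Fin N → ℝ) × (Fin N → ℝ)) :
    ∃ c : ℝ → (Fin N → ℝ) × (Fin N → ℝ), c 0 = y ∧
      (∀ t, projAnn N (c t) = Φ t (projAnn N y)) ∧
      ∀ t : ℝ, ∀ i : Fin N,
        HasDerivAt (fun s => (c s).1 i)
          (fderiv ℝ (H ∘ projAnn N) (c t) ((0 : Fin N → ℝ), Pi.single i 1)) t ∧
        HasDerivAt (fun s => (c s).2 i)
          (-(fderiv ℝ (H ∘ projAnn N) (c t) (Pi.single i 1, (0 : Fin N → ℝ)))) t := by
  obtain ⟨h0, -, h⟩ := hΦ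
  obtain ⟨c, hc, hc'⟩ := h (projAnn N y)
  have e : projAnn N (c 0) = projAnn N y := by rw [hc, h0]
  have e2 : (c 0).2 = y.2 := congrArg (fun w : Ann N => w.2) e
  let τ : (Fin N → ℝ) × (Fin N → ℝ) := y - c 0
  have hτ : ∀ z, projAnn N (z + τ) = projAnn N z := by
    intro z
    refine Prod.ext (funext fun i => ?_) ?_
    · have e1 : (((c 0).1 i : ℝ) : T1) = ((y.1 i : ℝ) : T1) := congrFun (congrArg Prod.fst e) i
      change (((z.1 i + (y.1 i - (c 0).1 i) : ℝ)) : T1) = ((z.1 i : ℝ) : T1)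
      rw [AddCircle.coe_add, AddCircle.coe_sub, e1, sub_self, add_zero]
    · change z.2 + (y.2 - (c 0).2) = z.2
      rw [e2, sub_self, add_zero]
  have hd : ∀ z, fderiv ℝ (H ∘ projAnn N) (z + τ) = fderiv ℝ (H ∘ projAnn N) z := by
    intro z
    rw [← fderiv_comp_add_right]
    congr 1
    funext w
    simp only [Function.comp, hτ]
  refine ⟨fun t => c t + τ, ?_, ?_, ?_⟩
  · simp [τ]
  · intro t
    rw [hτ, hc]
  · intro t i
    rw [hd]
    exact ⟨(hc' t i).1.add_const _, (hc' t i).2.add_const _⟩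

theorem hasDerivAt_of_coords_aux (N : ℕ) (c : ℝ → (Fin N → ℝ) × (Fin N → ℝ))
    (u v : Fin N → ℝ) (t : ℝ)
    (h : ∀ i, HasDerivAt (fun s => (c s).1 i) (u i) t ∧ HasDerivAt (fun s => (c s).2 i) (v i) t) :
    HasDerivAt c (u, v) t :=
  (hasDerivAt_pi.2 fun i => (h i).1).prodMk (hasDerivAt_pi.2 fun i => (h i).2)

/-- The Hamiltonian is a first integral. -/
theorem conserved_aux (N : ℕ) (H : Ann N → ℝ) (hH : ContDiff ℝ 2 (H ∘ projAnn N))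
    (Φ : ℝ → Ann N → Ann N) (hΦ : IsHamFlow N H Φ) (t : ℝ) (x : Ann N) : H (Φ t x) = H x := by
  obtain ⟨y, rfl⟩ := projAnn_surj_aux N x
  obtain ⟨c, hc0, hc, hc'⟩ := lift_aux N H Φ hΦ y
  have hD : ∀ s, HasDerivAt (fun r => (H ∘ projAnn N) (c r)) 0 s := by
    intro s
    have h1 := hasDerivAt_of_coords_aux N c _ _ s (hc' s)
    have h2 := ((hH.differentiable (by norm_num)) (c s)).hasFDerivAt.comp_hasDerivAt s h1
    set L := fderiv ℝ (H ∘ projAnn N) (c s) with hL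
    have key : ∀ u v : Fin N → ℝ, L (u, v) =
        ∑ i, (u i * L (Pi.single i 1, 0) + v i * L (0, Pi.single i 1)) := by
      intro u v
      have : ((u, v) : (Fin N → ℝ) × (Fin N → ℝ)) =
          ∑ i, (u i • ((Pi.single i 1, 0) : (Fin N → ℝ) × (Fin N → ℝ)) +
            v i • ((0, Pi.single i 1) : (Fin N → ℝ) × (Fin N → ℝ))) := by
        refine Prod.ext (funext fun j => ?_) (funext fun j => ?_)
        · simp [Prod.fst_sum, Finset.sum_apply, Pi.single_apply]
        · simp [Prod.snd_sum, Finset.sum_apply, Pi.single_apply]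
      rw [this, map_sum]
      simp only [map_add, map_smul, smul_eq_mul]
    have h3 : L (fun i => L (0, Pi.single i 1), fun i => -L (Pi.single i 1, 0)) = 0 := by
      rw [key]
      refine Finset.sum_eq_zero fun i _ => ?_
      ring
    rw [h3] at h2
    exact h2
  have := is_const_of_deriv_eq_zero (fun s => (hD s).differentiableAt) (fun s => (hD s).deriv) t 0
  simp only [Function.comp, hc] at this
  rw [this, hΦ.1]

/-- Derivative of the product Hamiltonian. -/
theorem fderiv_prod_aux (m m' : ℕ) (f : Ann m → ℝ) (g : Ann m' → ℝ)
    (hf : ContDiff ℝ 2 (f ∘ projAnn m)) (hg : ContDiff ℝ 2 (g ∘ projAnn m'))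
    (z v : ((Fin m → ℝ) × (Fin m → ℝ)) × ((Fin m' → ℝ) × (Fin m' → ℝ))) :
    fderiv ℝ (fun y : ((Fin m → ℝ) × (Fin m → ℝ)) × ((Fin m' → ℝ) × (Fin m' → ℝ)) =>
      f (projAnn m y.1) * g (projAnn m' y.2)) z v =
      f (projAnn m z.1) * fderiv ℝ (g ∘ projAnn m') z.2 v.2 +
      g (projAnn m' z.2) * fderiv ℝ (f ∘ projAnn m) z.1 v.1 := by
  have h1 := ((hf.differentiable (by norm_num)) z.1).hasFDerivAt.comp z
    (hasFDerivAt_fst (𝕜 := ℝ) (p := z))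
  have h2 := ((hg.differentiable (by norm_num)) z.2).hasFDerivAt.comp z
    (hasFDerivAt_snd (𝕜 := ℝ) (p := z))
  have h3 := (h1.mul h2).fderiv
  have h4 : (fun y : ((Fin m → ℝ) × (Fin m → ℝ)) × ((Fin m' → ℝ) × (Fin m' → ℝ)) =>
      f (projAnn m y.1) * g (projAnn m' y.2)) =
      ((f ∘ projAnn m) ∘ Prod.fst) * ((g ∘ projAnn m') ∘ Prod.snd) := rfl
  rw [h4, h3]
  simp

/-- The Hamiltonian vector field on the universal cover of the product. -/
def vfAux (m m' : ℕ) (h : ((Fin m → ℝ) × (Fin m → ℝ)) × ((Fin m' → ℝ) × (Fin m' → ℝ)) → ℝ)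
    (z : ((Fin m → ℝ) × (Fin m → ℝ)) × ((Fin m' → ℝ) × (Fin m' → ℝ))) :
    ((Fin m → ℝ) × (Fin m → ℝ)) × ((Fin m' → ℝ) × (Fin m' → ℝ)) :=
  ((fun i => fderiv ℝ h z (((0 : Fin m → ℝ), Pi.single i 1), 0),
    fun i => -(fderiv ℝ h z ((Pi.single i 1, (0 : Fin m → ℝ)), 0))),
   (fun j => fderiv ℝ h z (0, ((0 : Fin m' → ℝ), Pi.single j 1)),
    fun j => -(fderiv ℝ h z (0, (Pi.single j 1, (0 : Fin m' → ℝ))))))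

theorem vfAux_contDiff (m m' : ℕ)
    (h : ((Fin m → ℝ) × (Fin m → ℝ)) × ((Fin m' → ℝ) × (Fin m' → ℝ)) → ℝ)
    (hh : ContDiff ℝ 2 h) : ContDiff ℝ 1 (vfAux m m' h) := by
  have h1 : ContDiff ℝ 1 (fderiv ℝ h) := hh.fderiv_right (by norm_num)
  have h2 : ∀ v, ContDiff ℝ 1 (fun z => fderiv ℝ h z v) := fun v => h1.clm_apply contDiff_const
  exact ((contDiff_pi.2 fun i => h2 _).prodMk (contDiff_pi.2 fun i => (h2 _).neg)).prodMk
    ((contDiff_pi.2 fun i => h2 _).prodMk (contDiff_pi.2 fun i => (h2 _).neg))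

/-- Time-one map of the coupled flow at a point whose second component is critical for `g`. -/
theorem time_one_aux (m m' : ℕ) (f : Ann m → ℝ) (g : Ann m' → ℝ)
    (hf : ContDiff ℝ 2 (f ∘ projAnn m)) (hg : ContDiff ℝ 2 (g ∘ projAnn m'))
    (Φf : ℝ → Ann m → Ann m) (hΦf : IsHamFlow m f Φf)
    (Φ : ℝ → Ann m × Ann m' → Ann m × Ann m')
    (hΦ : IsHamFlowProd m m' (fun z => f z.1 * g z.2) Φ) (x : Ann m) (b : Ann m')
    (hb : ∀ y : (Fin m' → ℝ) × (Fin m' → ℝ), projAnn m' y = b →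
      fderiv ℝ (g ∘ projAnn m') y = 0) :
    Φ 1 (x, b) = (Φf (g b) x, b) := by
  obtain ⟨h0, -, h⟩ := hΦ
  obtain ⟨c, hc, hc'⟩ := h (x, b)
  have e := hc 0
  rw [h0] at e
  have e1 : projAnn m (c 0).1 = x := congrArg Prod.fst e
  have e2 : projAnn m' (c 0).2 = b := congrArg Prod.snd e
  obtain ⟨d, hd0, hd, hd'⟩ := lift_aux m f Φf hΦf (c 0).1
  let h : ((Fin m → ℝ) × (Fin m → ℝ)) × ((Fin m' → ℝ) × (Fin m' → ℝ)) → ℝ :=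
    fun y => f (projAnn m y.1) * g (projAnn m' y.2)
  have hh : ContDiff ℝ 2 h := (hf.comp contDiff_fst).mul (hg.comp contDiff_snd)
  have := ode_unique_aux (vfAux m m' h) (vfAux_contDiff m m' h hh) c
    (fun t => (d (g b * t), (c 0).2))
    (fun t => (hasDerivAt_of_coords_aux m (fun s => (c s).1) _ _ t (hc' t).1).prodMk
      (hasDerivAt_of_coords_aux m' (fun s => (c s).2) _ _ t (hc' t).2)) ?_ ?_
  · rw [← hc 1, this]
    simp [hd, e1, e2]
  · intro t
    have k1 : HasDerivAt (fun s : ℝ => g b * s) (g b) t := by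
      simpa using (hasDerivAt_id t).const_mul (g b)
    refine HasDerivAt.prodMk (hasDerivAt_of_coords_aux m _ _ _ t fun i => ?_)
      (hasDerivAt_of_coords_aux m' _ _ _ t fun i => ?_)
    · constructor
      · have := (hd' (g b * t) i).1.comp t k1
        simp only [h, fderiv_prod_aux m m' f g hf hg, hb _ e2, e2]
        simpa [Function.comp_def, mul_comm] using this
      · have := (hd' (g b * t) i).2.comp t k1
        simp only [h, fderiv_prod_aux m m' f g hf hg, hb _ e2, e2]
        simpa [Function.comp_def, mul_comm] using this
    · simp only [h, fderiv_prod_aux m m' f g hf hg, hb _ e2]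
      constructor
      · simpa using hasDerivAt_const t ((c 0).2.1 i)
      · simpa using hasDerivAt_const t ((c 0).2.2 i)
  · simp [hd0]

/-- Completeness of the coupled flow. -/
theorem exists_flow_aux (m m' : ℕ) (f : Ann m → ℝ) (g : Ann m' → ℝ)
    (hf : ContDiff ℝ 2 (f ∘ projAnn m)) (hg : ContDiff ℝ 2 (g ∘ projAnn m'))
    (Φf : ℝ → Ann m → Ann m) (hΦf : IsHamFlow m f Φf)
    (Φg : ℝ → Ann m' → Ann m') (hΦg : IsHamFlow m' g Φg) :
    IsHamFlowProd m m' (fun z => f z.1 * g z.2)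
      (fun t z => (Φf (g z.2 * t) z.1, Φg (f z.1 * t) z.2)) := by
  have cf := conserved_aux m f hf Φf hΦf
  have cg := conserved_aux m' g hg Φg hΦg
  refine ⟨?_, ?_, ?_⟩
  · intro x
    simp [hΦf.1, hΦg.1]
  · intro s t x
    simp only [cf, cg, mul_add, hΦf.2.1, hΦg.2.1]
  · intro x
    obtain ⟨c, hc, hc'⟩ := hΦf.2.2 x.1
    obtain ⟨d, hd, hd'⟩ := hΦg.2.2 x.2
    refine ⟨fun t => (c (g x.2 * t), d (f x.1 * t)), ?_, ?_⟩
    · intro t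
      simp only [hc, hd]
    · intro t
      have k1 : HasDerivAt (fun s : ℝ => g x.2 * s) (g x.2) t := by
        simpa using (hasDerivAt_id t).const_mul (g x.2)
      have k2 : HasDerivAt (fun s : ℝ => f x.1 * s) (f x.1) t := by
        simpa using (hasDerivAt_id t).const_mul (f x.1)
      simp only [fderiv_prod_aux m m' f g hf hg, hc, hd, cf, cg]
      refine ⟨fun i => ⟨?_, ?_⟩, fun i => ⟨?_, ?_⟩⟩
      · simpa [Function.comp_def, mul_comm] using (hc' (g x.2 * t) i).1.comp t k1
      · simpa [Function.comp_def, mul_comm] using (hc' (g x.2 * t) i).2.comp t k1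
      · simpa [Function.comp_def, mul_comm] using (hd' (f x.1 * t) i).1.comp t k2
      · simpa [Function.comp_def, mul_comm] using (hd' (f x.1 * t) i).2.comp t k2

/-- The Herman–Marco–Sauzin coupling lemma: if `a` is `q`-periodic for `G` and the
synchronization conditions hold, then the Hamiltonian vector field of `f ⊗ g` is
complete, the map `Ψ = Φ^{f⊗g} ∘ (F × G)` is well defined, and
`Ψ^q(x, a) = (Φ^f(F^q(x)), a)` for every `x ∈ 𝔸^m`. -/
theorem coupling_lemma (m m' : ℕ) (hm : 1 ≤ m) (hm' : 1 ≤ m')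
    (F : Ann m → Ann m) (G : Ann m' → Ann m')
    (f : Ann m → ℝ) (g : Ann m' → ℝ)
    (hf : ContDiff ℝ 2 (f ∘ projAnn m)) (hg : ContDiff ℝ 2 (g ∘ projAnn m'))
    (Φf : ℝ → Ann m → Ann m) (hΦf : IsHamFlow m f Φf)
    (Φg : ℝ → Ann m' → Ann m') (hΦg : IsHamFlow m' g Φg)
    (q : ℕ) (hq : 1 ≤ q) (a : Ann m') (ha : G^[q] a = a)
    (hga : g a = 1)
    (hdga : ∀ y : (Fin m' → ℝ) × (Fin m' → ℝ), projAnn m' y = a →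
      fderiv ℝ (g ∘ projAnn m') y = 0)
    (hsync : ∀ k : ℕ, 1 ≤ k → k ≤ q - 1 →
      g (G^[k] a) = 0 ∧
      ∀ y : (Fin m' → ℝ) × (Fin m' → ℝ), projAnn m' y = G^[k] a →
        fderiv ℝ (g ∘ projAnn m') y = 0) :
    (∃ Φ : ℝ → Ann m × Ann m' → Ann m × Ann m',
      IsHamFlowProd m m' (fun z => f z.1 * g z.2) Φ) ∧
    ∀ Φ : ℝ → Ann m × Ann m' → Ann m × Ann m',
      IsHamFlowProd m m' (fun z => f z.1 * g z.2) Φ →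
      ∀ x : Ann m,
        ((Φ 1) ∘ fun z : Ann m × Ann m' => (F z.1, G z.2))^[q] (x, a) =
          (Φf 1 (F^[q] x), a) := by
  refine ⟨⟨_, exists_flow_aux m m' f g hf hg Φf hΦf Φg hΦg⟩, ?_⟩
  intro Φ hΦ x
  have T := time_one_aux m m' f g hf hg Φf hΦf Φ hΦ
  have hk : ∀ k : ℕ, k ≤ q - 1 →
      ((Φ 1) ∘ fun z : Ann m × Ann m' => (F z.1, G z.2))^[k] (x, a) = (F^[k] x, G^[k] a) := by
    intro k
    induction k with
    | zero => intro _; rfl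
    | succ k ih =>
      intro hle
      rw [Function.iterate_succ_apply', ih (by omega)]
      obtain ⟨h1, h2⟩ := hsync (k + 1) (by omega) hle
      rw [Function.iterate_succ_apply' F, Function.iterate_succ_apply' G]
      rw [Function.iterate_succ_apply'] at h1 h2
      simp only [Function.comp]
      rw [T _ _ h2, h1, hΦf.1]
  obtain ⟨p, rfl⟩ : ∃ p, q = p + 1 := ⟨q - 1, by omega⟩
  rw [Function.iterate_succ_apply', hk p (by omega), Function.iterate_succ_apply' F]
  rw [Function.iterate_succ_apply'] at ha
  simp only [Function.comp]
  rw [ha, T _ _ hdga, hga]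
end
end

section
/- Let f : 𝔸^m → ℝ and g : 𝔸^{m'} → ℝ be C² Hamiltonian functions whose Hamiltonian vector fields X_f and X_g are complete. Then the Hamiltonian vector field of f ⊗ g on 𝔸^{m+m'} is complete, and for all x ∈ 𝔸^m, x' ∈ 𝔸^{m'} and t ∈ ℝ one has Φ_t^{f⊗g}(x, x') = (Φ_t^{g(x')·f}(x), Φ_t^{f(x)·g}(x')), where g(x')·f denotes the Hamiltonian f multiplied by the constant g(x') and f(x)·g denotes g multiplied by the constant f(x). -/
open scoped BigOperators
open Real

noncomputable section

/-- Hamiltonian vector field associated with a differential. -/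
def hamV (N : ℕ) (F : (Fin N → ℝ) × (Fin N → ℝ) → ℝ) (p : (Fin N → ℝ) × (Fin N → ℝ)) :
    (Fin N → ℝ) × (Fin N → ℝ) :=
  (fun i => fderiv ℝ F p ((0 : Fin N → ℝ), Pi.single i 1),
   fun i => -(fderiv ℝ F p (Pi.single i 1, (0 : Fin N → ℝ))))

lemma hamV_contDiff (N : ℕ) {F : (Fin N → ℝ) × (Fin N → ℝ) → ℝ} (hF : ContDiff ℝ 2 F) :
    ContDiff ℝ 1 (hamV N F) := by
  have h : ContDiff ℝ 1 (fderiv ℝ F) := hF.fderiv_right (by norm_num)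
  unfold hamV
  refine ContDiff.prodMk (contDiff_pi.2 fun i => ?_) (contDiff_pi.2 fun i => ?_)
  · exact h.clm_apply contDiff_const
  · exact (h.clm_apply contDiff_const).neg

lemma fderiv_hamV (N : ℕ) (F : (Fin N → ℝ) × (Fin N → ℝ) → ℝ) (p : (Fin N → ℝ) × (Fin N → ℝ)) :
    fderiv ℝ F p (hamV N F p) = 0 := by
  set D := fderiv ℝ F p with hD
  have key : ∀ u v : Fin N → ℝ, D (u, v) =
      ∑ i, u i * D (Pi.single i 1, 0) + ∑ i, v i * D (0, Pi.single i 1) := by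
    intro u v
    have hs : ∀ i : Fin N, (Pi.single i 1 : Fin N → ℝ) = fun j => if i = j then 1 else 0 := by
      intro i; ext j; simp [Pi.single_apply, eq_comm]
    have h1 : D (u, 0) = ∑ i, u i * D (Pi.single i 1, 0) := by
      have := (D.comp (ContinuousLinearMap.inl ℝ (Fin N → ℝ) (Fin N → ℝ))).toLinearMap.pi_apply_eq_sum_univ u
      simpa [← hs] using this
    have h2 : D (0, v) = ∑ i, v i * D (0, Pi.single i 1) := by
      have := (D.comp (ContinuousLinearMap.inr ℝ (Fin N → ℝ) (Fin N → ℝ))).toLinearMap.pi_apply_eq_sum_univ v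
      simpa [← hs] using this
    rw [← h1, ← h2, ← map_add]; simp
  unfold hamV
  rw [key, ← Finset.sum_add_distrib]
  refine Finset.sum_eq_zero fun i _ => ?_
  rw [← hD]; ring

lemma ode_unique {E : Type*} [NormedAddCommGroup E] [NormedSpace ℝ E] [ProperSpace E]
    {V : E → E} (hV : ContDiff ℝ 1 V) {c d : ℝ → E}
    (hc : ∀ t, HasDerivAt c (V (c t)) t) (hd : ∀ t, HasDerivAt d (V (d t)) t)
    (h0 : c 0 = d 0) (t : ℝ) : c t = d t := by
  have cc : Continuous c := continuous_iff_continuousAt.2 fun t => (hc t).continuousAt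
  have cd : Continuous d := continuous_iff_continuousAt.2 fun t => (hd t).continuousAt
  set a := -(|t| + 1)
  set b := |t| + 1
  have hK : IsCompact (c '' Set.Icc a b ∪ d '' Set.Icc a b) :=
    (isCompact_Icc.image cc).union (isCompact_Icc.image cd)
  obtain ⟨R, hR⟩ := hK.isBounded.subset_closedBall (0 : E)
  obtain ⟨K, hKl⟩ := hV.contDiffOn.exists_lipschitzOnWith (s := Metric.closedBall (0 : E) R)
    one_ne_zero (convex_closedBall _ _) (isCompact_closedBall _ _)
  refine ODE_solution_unique_of_mem_Icc (v := fun _ => V) (s := fun _ => Metric.closedBall (0 : E) R)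
    (a := a) (b := b) (t₀ := 0) (K := K) (fun _ _ => hKl) ?_ cc.continuousOn (fun t _ => hc t) ?_ cd.continuousOn
    (fun t _ => hd t) ?_ h0 ?_
  · have := abs_nonneg t
    constructor <;> simp only [a, b] <;> linarith
  · intro s hs
    exact hR (Or.inl ⟨s, Set.Ioo_subset_Icc_self hs, rfl⟩)
  · intro s hs
    exact hR (Or.inr ⟨s, Set.Ioo_subset_Icc_self hs, rfl⟩)
  · have := neg_abs_le t
    have := le_abs_self t
    constructor <;> simp only [a, b] <;> linarith

lemma projAnn_surj (N : ℕ) (x : Ann N) : ∃ p, projAnn N p = x := by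
  choose u hu using fun i => QuotientAddGroup.mk_surjective (x.1 i)
  exact ⟨(u, x.2), Prod.ext (funext hu) rfl⟩

lemma projAnn_shift (N : ℕ) {p q : (Fin N → ℝ) × (Fin N → ℝ)} (h : projAnn N p = projAnn N q)
    (y : (Fin N → ℝ) × (Fin N → ℝ)) : projAnn N (y + (p - q)) = projAnn N y := by
  have h1 := congrFun (congrArg Prod.fst h)
  have h2 := congrArg Prod.snd h
  simp only [projAnn] at h1 h2 ⊢
  refine Prod.ext (funext fun i => ?_) ?_
  · simp [h1 i]
  · simp [h2]

/-- Integral curves (of `a` times the Hamiltonian field) through lifts of the same point project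
to the same curve. -/
lemma curve_unique (N : ℕ) {f : Ann N → ℝ} (hf : ContDiff ℝ 2 (f ∘ projAnn N)) (a : ℝ)
    {c d : ℝ → (Fin N → ℝ) × (Fin N → ℝ)}
    (hc : ∀ t, HasDerivAt c (a • hamV N (f ∘ projAnn N) (c t)) t)
    (hd : ∀ t, HasDerivAt d (a • hamV N (f ∘ projAnn N) (d t)) t)
    (h0 : projAnn N (c 0) = projAnn N (d 0)) (t : ℝ) : projAnn N (c t) = projAnn N (d t) := by
  have hs := projAnn_shift N h0
  have hF : (fun y => (f ∘ projAnn N) (y + (c 0 - d 0))) = f ∘ projAnn N := by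
    funext y; simp only [Function.comp, hs]
  have hper : ∀ y, hamV N (f ∘ projAnn N) (y + (c 0 - d 0)) = hamV N (f ∘ projAnn N) y := by
    intro y
    unfold hamV
    rw [← fderiv_comp_add_right, hF]
  have hd' : ∀ t, HasDerivAt (fun s => d s + (c 0 - d 0))
      (a • hamV N (f ∘ projAnn N) (d t + (c 0 - d 0))) t := by
    intro t
    rw [hper]
    exact (hd t).add_const _
  have := ode_unique (V := fun y => a • hamV N (f ∘ projAnn N) y)
    ((hamV_contDiff N hf).const_smul a) hc hd' (by simp) t
  rw [this, hs]

lemma hamV_const_mul (N : ℕ) {f : Ann N → ℝ} (hf : ContDiff ℝ 2 (f ∘ projAnn N)) (a : ℝ) (p) :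
    hamV N ((fun z => a * f z) ∘ projAnn N) p = a • hamV N (f ∘ projAnn N) p := by
  have : ((fun z => a * f z) ∘ projAnn N) = fun y => a * (f ∘ projAnn N) y := rfl
  unfold hamV
  rw [this, fderiv_const_mul ((hf.differentiable (by norm_num)) p)]
  ext i <;> simp

lemma hasDerivAt_pair (N : ℕ) (c : ℝ → (Fin N → ℝ) × (Fin N → ℝ)) (v) (t : ℝ) :
    HasDerivAt c v t ↔ ∀ i, HasDerivAt (fun s => (c s).1 i) (v.1 i) t ∧
      HasDerivAt (fun s => (c s).2 i) (v.2 i) t := by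
  constructor
  · intro h i
    have h1 : HasDerivAt (fun s => (c s).1) v.1 t := ((hasFDerivAt_fst (p := c t)).comp_hasDerivAt t h :)
    have h2 : HasDerivAt (fun s => (c s).2) v.2 t := ((hasFDerivAt_snd (p := c t)).comp_hasDerivAt t h :)
    exact ⟨hasDerivAt_pi.1 h1 i, hasDerivAt_pi.1 h2 i⟩
  · intro h
    exact (hasDerivAt_pi.2 fun i => (h i).1).prodMk (hasDerivAt_pi.2 fun i => (h i).2)

lemma isHamFlow_iff (N : ℕ) (H : Ann N → ℝ) (Φ : ℝ → Ann N → Ann N) :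
    IsHamFlow N H Φ ↔ (∀ x, Φ 0 x = x) ∧ (∀ s t : ℝ, ∀ x, Φ (s + t) x = Φ s (Φ t x)) ∧
    ∀ x : Ann N, ∃ c : ℝ → (Fin N → ℝ) × (Fin N → ℝ),
      (∀ t, projAnn N (c t) = Φ t x) ∧
      ∀ t : ℝ, HasDerivAt c (hamV N (H ∘ projAnn N) (c t)) t := by
  simp only [hasDerivAt_pair]
  rfl

/-- conservation along curves tangent to the Hamiltonian field -/
lemma conserve (N : ℕ) {F : (Fin N → ℝ) × (Fin N → ℝ) → ℝ} (hF : ContDiff ℝ 2 F) (a : ℝ → ℝ)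
    {c : ℝ → (Fin N → ℝ) × (Fin N → ℝ)}
    (hc : ∀ t, HasDerivAt c (a t • hamV N F (c t)) t) (t : ℝ) : F (c t) = F (c 0) := by
  have h : ∀ t, HasDerivAt (fun s => F (c s)) 0 t := by
    intro t
    have := ((hF.differentiable (by norm_num)) (c t)).hasFDerivAt.comp_hasDerivAt t (hc t)
    rwa [map_smul, fderiv_hamV, smul_zero] at this
  exact is_const_of_deriv_eq_zero (fun t => (h t).differentiableAt) (fun t => (h t).deriv) t 0

lemma scaled_flow (N : ℕ) {f : Ann N → ℝ} (hf : ContDiff ℝ 2 (f ∘ projAnn N)) (a : ℝ)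
    {Φ : ℝ → Ann N → Ann N} (h : IsHamFlow N f Φ) :
    IsHamFlow N (fun z => a * f z) (fun t x => Φ (a * t) x) := by
  rw [isHamFlow_iff] at h ⊢
  obtain ⟨h0, ha, hx⟩ := h
  refine ⟨fun x => by simp [h0], fun s t x => by simp only [mul_add, ha], fun x => ?_⟩
  obtain ⟨c, hc, hd⟩ := hx x
  refine ⟨fun t => c (a * t), fun t => hc _, fun t => ?_⟩
  rw [hamV_const_mul N hf]
  have := (hd (a * t)).scomp t ((hasDerivAt_id t).const_mul a)
  simpa [Function.comp_def] using this

lemma flow_conserve (N : ℕ) {f : Ann N → ℝ} (hf : ContDiff ℝ 2 (f ∘ projAnn N))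
    {Φ : ℝ → Ann N → Ann N} (h : IsHamFlow N f Φ) (t : ℝ) (x) : f (Φ t x) = f x := by
  rw [isHamFlow_iff] at h
  obtain ⟨h0, ha, hx⟩ := h
  obtain ⟨c, hc, hd⟩ := hx x
  have := conserve N hf (fun _ => 1) (c := c) (by simpa using hd) t
  simpa [hc, h0] using this

lemma fderiv_tensor (m m' : ℕ) {f : Ann m → ℝ} {g : Ann m' → ℝ}
    (hf : ContDiff ℝ 2 (f ∘ projAnn m)) (hg : ContDiff ℝ 2 (g ∘ projAnn m')) (p u) :
    fderiv ℝ (fun y : ((Fin m → ℝ) × (Fin m → ℝ)) × ((Fin m' → ℝ) × (Fin m' → ℝ)) =>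
      f (projAnn m y.1) * g (projAnn m' y.2)) p u =
    g (projAnn m' p.2) * fderiv ℝ (f ∘ projAnn m) p.1 u.1 +
    f (projAnn m p.1) * fderiv ℝ (g ∘ projAnn m') p.2 u.2 := by
  have h1 := ((hf.differentiable (by norm_num)) p.1).hasFDerivAt.comp p hasFDerivAt_fst
  have h2 := ((hg.differentiable (by norm_num)) p.2).hasFDerivAt.comp p hasFDerivAt_snd
  have h3 : HasFDerivAt (fun y : ((Fin m → ℝ) × (Fin m → ℝ)) × ((Fin m' → ℝ) × (Fin m' → ℝ)) =>
      f (projAnn m y.1) * g (projAnn m' y.2)) _ p := h1.mul h2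
  rw [h3.fderiv]
  simp
  ring

lemma isHamFlowProd_iff (m m' : ℕ) {f : Ann m → ℝ} {g : Ann m' → ℝ}
    (hf : ContDiff ℝ 2 (f ∘ projAnn m)) (hg : ContDiff ℝ 2 (g ∘ projAnn m'))
    (Φ : ℝ → Ann m × Ann m' → Ann m × Ann m') :
    IsHamFlowProd m m' (fun z => f z.1 * g z.2) Φ ↔
    (∀ x, Φ 0 x = x) ∧ (∀ s t : ℝ, ∀ x, Φ (s + t) x = Φ s (Φ t x)) ∧
    ∀ x : Ann m × Ann m',
      ∃ c : ℝ → ((Fin m → ℝ) × (Fin m → ℝ)) × ((Fin m' → ℝ) × (Fin m' → ℝ)),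
        (∀ t, (projAnn m (c t).1, projAnn m' (c t).2) = Φ t x) ∧
        ∀ t : ℝ,
          HasDerivAt (fun s => (c s).1)
            (g (projAnn m' (c t).2) • hamV m (f ∘ projAnn m) (c t).1) t ∧
          HasDerivAt (fun s => (c s).2)
            (f (projAnn m (c t).1) • hamV m' (g ∘ projAnn m') (c t).2) t := by
  simp only [hasDerivAt_pair, IsHamFlowProd, fderiv_tensor m m' hf hg]
  simp [hamV]

/-- Splitting of the flow of a product Hamiltonian `f ⊗ g`: if `X_f` and `X_g` are
complete, then `X_{f⊗g}` is complete and
`Φ_t^{f⊗g}(x, x') = (Φ_t^{g(x')·f}(x), Φ_t^{f(x)·g}(x'))`. -/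
theorem tensor_flow_splitting (m m' : ℕ)
    (f : Ann m → ℝ) (g : Ann m' → ℝ)
    (hf : ContDiff ℝ 2 (f ∘ projAnn m)) (hg : ContDiff ℝ 2 (g ∘ projAnn m'))
    (hcf : ∃ Φ : ℝ → Ann m → Ann m, IsHamFlow m f Φ)
    (hcg : ∃ Φ : ℝ → Ann m' → Ann m', IsHamFlow m' g Φ) :
    (∃ Φ : ℝ → Ann m × Ann m' → Ann m × Ann m',
      IsHamFlowProd m m' (fun z => f z.1 * g z.2) Φ) ∧
    (∀ x' : Ann m', ∃ Φ₁ : ℝ → Ann m → Ann m,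
      IsHamFlow m (fun z => g x' * f z) Φ₁) ∧
    (∀ x : Ann m, ∃ Φ₂ : ℝ → Ann m' → Ann m',
      IsHamFlow m' (fun z => f x * g z) Φ₂) ∧
    ∀ Φ : ℝ → Ann m × Ann m' → Ann m × Ann m',
      IsHamFlowProd m m' (fun z => f z.1 * g z.2) Φ →
      ∀ x : Ann m, ∀ x' : Ann m',
        ∀ Φ₁ : ℝ → Ann m → Ann m, IsHamFlow m (fun z => g x' * f z) Φ₁ →
        ∀ Φ₂ : ℝ → Ann m' → Ann m', IsHamFlow m' (fun z => f x * g z) Φ₂ →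
        ∀ t : ℝ, Φ t (x, x') = (Φ₁ t x, Φ₂ t x') := by
  obtain ⟨Φf, hΦf⟩ := hcf
  obtain ⟨Φg, hΦg⟩ := hcg
  refine ⟨⟨fun t z => (Φf (g z.2 * t) z.1, Φg (f z.1 * t) z.2), ?_⟩,
    fun x' => ⟨_, scaled_flow m hf (g x') hΦf⟩, fun x => ⟨_, scaled_flow m' hg (f x) hΦg⟩, ?_⟩
  · rw [isHamFlowProd_iff m m' hf hg]
    refine ⟨fun x => ?_, fun s t x => ?_, fun x => ?_⟩
    · simp [hΦf.1, hΦg.1]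
    · simp only [flow_conserve m hf hΦf, flow_conserve m' hg hΦg, mul_add, hΦf.2.1, hΦg.2.1]
    · obtain ⟨c, hc, hc'⟩ := ((isHamFlow_iff _ _ _).1 (scaled_flow m hf (g x.2) hΦf)).2.2 x.1
      obtain ⟨d, hd, hd'⟩ := ((isHamFlow_iff _ _ _).1 (scaled_flow m' hg (f x.1) hΦg)).2.2 x.2
      refine ⟨fun t => (c t, d t), fun t => by simp only [hc, hd], fun t => ⟨?_, ?_⟩⟩
      · have := hc' t
        rw [hamV_const_mul m hf] at this
        simpa only [hd, flow_conserve m' hg hΦg] using this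
      · have := hd' t
        rw [hamV_const_mul m' hg] at this
        simpa only [hc, flow_conserve m hf hΦf] using this
  · intro Φ hΦ x x' Φ₁ hΦ₁ Φ₂ hΦ₂ t
    rw [isHamFlowProd_iff m m' hf hg] at hΦ
    rw [isHamFlow_iff] at hΦ₁ hΦ₂
    obtain ⟨c, hc, hc'⟩ := hΦ.2.2 (x, x')
    obtain ⟨c₁, hc₁, hc₁'⟩ := hΦ₁.2.2 x
    obtain ⟨c₂, hc₂, hc₂'⟩ := hΦ₂.2.2 x'
    simp only [hamV_const_mul m hf] at hc₁'
    simp only [hamV_const_mul m' hg] at hc₂'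
    have h0 := hc 0
    rw [hΦ.1, Prod.mk.injEq] at h0
    have hF : ∀ t, f (projAnn m (c t).1) = f x := fun t => by
      have := conserve m hf (fun t => g (projAnn m' (c t).2)) (fun t => (hc' t).1) t
      simpa only [Function.comp, h0.1] using this
    have hG : ∀ t, g (projAnn m' (c t).2) = g x' := fun t => by
      have := conserve m' hg (fun t => f (projAnn m (c t).1)) (fun t => (hc' t).2) t
      simpa only [Function.comp, h0.2] using this
    simp only [hF, hG] at hc'
    rw [← hc, ← hc₁, ← hc₂]
    refine Prod.ext ?_ ?_
    · exact curve_unique m hf (g x') (fun t => (hc' t).1) hc₁' (by rw [h0.1, hc₁, hΦ₁.1]) t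
    · exact curve_unique m' hg (f x) (fun t => (hc' t).2) hc₂' (by rw [h0.2, hc₂, hΦ₂.1]) t
end
end

section
/- Let U : 𝕋 → ℝ be U(θ) = −(2π)^{−1} sin(2πθ), so that U'(θ) = −cos(2πθ) and U'(0) = −1. For q ∈ ℕ* define ψ_q : 𝕋 × ℝ → 𝕋 × ℝ by ψ_q(θ, I) = (θ + qI, I − q^{−1} U'(θ + qI)). Then ψ_q is a bijection and for every k ∈ ℤ one has ψ_q^k(0, 0) = (0, k q^{−1}). In particular, after q iterations the point (0,0) drifts from the circle I = 0 to the circle I = 1, and the orbit (ψ_q^k(0,0))_{k∈ℤ} is bi-asymptotic to infinity: |I-component of ψ_q^k(0,0)| → ∞ as k → ±∞. -/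
open scoped BigOperators
open Real

noncomputable section

/-- The canonical representative in `[0,1)` of a point of the circle. -/
noncomputable def rep (θ : T1) : ℝ := ((AddCircle.equivIco 1 0) θ).1

/-- The function `θ ↦ cos (2πθ)` on the circle. -/
noncomputable def cosC (θ : T1) : ℝ := Real.cos (2 * Real.pi * rep θ)

/-- The derivative `U'(θ) = −cos(2πθ)` of the potential `U(θ) = −(2π)⁻¹ sin(2πθ)`. -/
noncomputable def Uderiv (θ : T1) : ℝ := -cosC θ

/-- The map `ψ_q(θ, I) = (θ + qI, I − q⁻¹ U'(θ + qI))` on the annulus `𝕋 × ℝ`. -/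
noncomputable def psiMap (q : ℕ) : T1 × ℝ → T1 × ℝ :=
  fun z => (z.1 + (((q : ℝ) * z.2 : ℝ) : T1),
    z.2 - (q : ℝ)⁻¹ * Uderiv (z.1 + (((q : ℝ) * z.2 : ℝ) : T1)))

/-- The map `ψ_q` is a bijection of the annulus; its orbit through `(0,0)` satisfies
`ψ_q^k(0,0) = (0, k/q)`: in particular after `q` iterations the point `(0,0)` drifts
from the circle `I = 0` to the circle `I = 1`, and the bi-infinite orbit is
bi-asymptotic to infinity. -/
theorem psi_unstable_orbit (q : ℕ) (hq : 1 ≤ q) :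
    Function.Bijective (psiMap q) ∧
    (∀ k : ℕ, (psiMap q)^[k] (((0 : ℝ) : T1), (0 : ℝ)) = (((0 : ℝ) : T1), (k : ℝ) / q)) ∧
    (∀ k : ℤ, psiMap q (((0 : ℝ) : T1), (k : ℝ) / q) = (((0 : ℝ) : T1), ((k : ℝ) + 1) / q)) ∧
    (psiMap q)^[q] (((0 : ℝ) : T1), (0 : ℝ)) = (((0 : ℝ) : T1), (1 : ℝ)) ∧
    Filter.Tendsto (fun k : ℤ => |(k : ℝ) / q|) (Filter.cocompact ℤ) Filter.atTop := by
  have hq0 : (q : ℝ) ≠ 0 := by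
    have : q ≠ 0 := by omega
    exact_mod_cast this
  have hqpos : (0 : ℝ) < q := lt_of_le_of_ne (Nat.cast_nonneg q) (Ne.symm hq0)
  have hrep : rep ((0 : ℝ) : T1) = 0 := by
    unfold rep
    rw [AddCircle.coe_equivIco_mk_apply]
    simp
  have hU : Uderiv ((0 : ℝ) : T1) = -1 := by
    unfold Uderiv cosC
    rw [hrep]
    simp
  have hint : ∀ k : ℤ, (((k : ℝ)) : T1) = ((0 : ℝ) : T1) := by
    intro k
    rw [AddCircle.coe_zero, AddCircle.coe_eq_zero_iff]
    exact ⟨k, by simp⟩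
  have hstep : ∀ k : ℤ, psiMap q (((0 : ℝ) : T1), (k : ℝ) / q)
      = (((0 : ℝ) : T1), ((k : ℝ) + 1) / q) := by
    intro k
    have h1 : ((0 : ℝ) : T1) + (((q : ℝ) * ((k : ℝ) / q) : ℝ) : T1) = ((0 : ℝ) : T1) := by
      rw [mul_div_cancel₀ _ hq0, hint k, ← AddCircle.coe_add, add_zero]
    unfold psiMap
    simp only [h1, hU]
    refine Prod.ext rfl ?_
    simp only
    field_simp
    ring
  have hiter : ∀ k : ℕ, (psiMap q)^[k] (((0 : ℝ) : T1), (0 : ℝ))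
      = (((0 : ℝ) : T1), (k : ℝ) / q) := by
    intro k
    induction k with
    | zero => simp
    | succ n ih =>
      rw [Function.iterate_succ_apply', ih]
      have := hstep (n : ℤ)
      push_cast at this ⊢
      exact this
  refine ⟨?_, hiter, hstep, ?_, ?_⟩
  · rw [Function.bijective_iff_has_inverse]
    refine ⟨fun w => (w.1 - (((q : ℝ) * (w.2 + (q : ℝ)⁻¹ * Uderiv w.1) : ℝ) : T1),
      w.2 + (q : ℝ)⁻¹ * Uderiv w.1), ?_, ?_⟩
    · rintro ⟨a, b⟩
      simp only [psiMap, sub_add_cancel, add_sub_cancel_right]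
    · rintro ⟨a, b⟩
      simp only [psiMap, sub_add_cancel, add_sub_cancel_right]
  · rw [hiter q, div_self hq0]
  · have h := tendsto_norm_cocompact_atTop (E := ℤ)
    have h2 := h.atTop_div_const hqpos
    refine h2.congr fun k => ?_
    rw [abs_div, abs_of_pos hqpos, Int.norm_eq_abs]
end
end

section
/- Let σ = −1/2 + (2/π)·arctan(e^π), so 0 < σ < 1/2. Let P(θ, I) = ½I² − cos(2πθ) be the pendulum on 𝕋 × ℝ, let M ∈ ℕ*, let I_M ∈ (2,3) be the unique value for which (0, I_M) is M-periodic for Φ^P (equivalently, whose rotational orbit has traversal time M), and write Φ_t^P(0, I_M) = (θ_M(t), I_M(t)). Then for every t ∈ [1/2, M − 1/2], the angle θ_M(t) ∈ 𝕋 does not lie in the arc [−σ, σ] (mod 1). -/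
open scoped BigOperators
open Real

noncomputable section

/-- Projection of the universal cover `ℝ × ℝ` onto the annulus `𝕋 × ℝ`. -/
noncomputable def projA1 : ℝ × ℝ → T1 × ℝ := fun x => ((x.1 : T1), x.2)

/-- `Φ` is the complete flow of the Hamiltonian `H` on the annulus `𝕋 × ℝ`: it is a
one-parameter family of maps whose orbits lift to curves on the universal cover solving
Hamilton's equations `θ' = ∂H/∂I`, `I' = −∂H/∂θ`. -/
def IsHamFlow1 (H : T1 × ℝ → ℝ) (Φ : ℝ → T1 × ℝ → T1 × ℝ) : Prop :=
  (∀ x, Φ 0 x = x) ∧ (∀ s t : ℝ, ∀ x, Φ (s + t) x = Φ s (Φ t x)) ∧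
    ∀ x : T1 × ℝ, ∃ c : ℝ → ℝ × ℝ,
      (∀ t, projA1 (c t) = Φ t x) ∧
      ∀ t : ℝ,
        HasDerivAt (fun s => (c s).1) (fderiv ℝ (H ∘ projA1) (c t) (0, 1)) t ∧
        HasDerivAt (fun s => (c s).2) (-(fderiv ℝ (H ∘ projA1) (c t) (1, 0))) t

/-- The pendulum Hamiltonian `P(θ, I) = ½I² − cos(2πθ)` on `𝕋 × ℝ`. -/
noncomputable def Pend : T1 × ℝ → ℝ := fun z => (1 / 2) * z.2 ^ 2 + (-cosC z.1)

/-- The traversal time `T(I₀) = ∫₀¹ dθ/√(I₀² − 4 sin²(πθ))` of the rotational pendulum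
orbit through `(0, I₀)`, for `I₀ > 2`. -/
noncomputable def traversalTime (I₀ : ℝ) : ℝ :=
  ∫ θ in (0 : ℝ)..1, (Real.sqrt (I₀ ^ 2 - 4 * Real.sin (Real.pi * θ) ^ 2))⁻¹

/-- The constant `σ = −1/2 + (2/π)·arctan(e^π)`. -/
noncomputable def sigmaConst : ℝ := -(1 / 2) + (2 / Real.pi) * Real.arctan (Real.exp Real.pi)

theorem paa_int {a b : ℝ} (h : (a : T1) = (b : T1)) : ∃ k : ℤ, a = b + k := by
  have h2 : ((a - b : ℝ) : T1) = 0 := by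
    rw [AddCircle.coe_sub, h, sub_self]
  obtain ⟨k, hk⟩ := (AddCircle.coe_eq_zero_iff (1 : ℝ)).1 h2
  refine ⟨k, ?_⟩
  simp at hk
  linarith

theorem paa_cosC (x : ℝ) : cosC (x : T1) = Real.cos (2 * Real.pi * x) := by
  unfold cosC
  have h : ((rep (x : T1) : ℝ) : T1) = (x : T1) := by
    unfold rep
    exact (AddCircle.equivIco 1 0).symm_apply_apply (x : T1)
  obtain ⟨k, hk⟩ := paa_int h
  rw [hk, mul_add, mul_comm (2 * Real.pi) (k : ℝ)]
  exact Real.cos_add_int_mul_two_pi _ k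

theorem paa_fderiv (p v : ℝ × ℝ) : fderiv ℝ (Pend ∘ projA1) p v =
    p.2 * v.2 + 2 * Real.pi * Real.sin (2 * Real.pi * p.1) * v.1 := by
  have e : Pend ∘ projA1 =
      fun x : ℝ × ℝ => (1 / 2) * x.2 ^ 2 + (-Real.cos (2 * Real.pi * x.1)) := by
    funext x
    simp only [Function.comp, Pend, projA1, paa_cosC]
  have h1 : HasFDerivAt (fun x : ℝ × ℝ => x.1) (ContinuousLinearMap.fst ℝ ℝ ℝ) p := hasFDerivAt_fst
  have h2 : HasFDerivAt (fun x : ℝ × ℝ => x.2) (ContinuousLinearMap.snd ℝ ℝ ℝ) p := hasFDerivAt_snd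
  have h3 := ((h2.pow 2).const_mul (1 / 2 : ℝ)).add ((h1.const_mul (2 * Real.pi)).cos.neg)
  rw [e]
  have h4 := h3.fderiv
  refine (congrArg (fun L : ℝ × ℝ →L[ℝ] ℝ => L v) h4).trans ?_
  simp
  ring

/-- The speed of the rotational orbit at angle `x`. -/
def paaF (I₀ x : ℝ) : ℝ := Real.sqrt (I₀ ^ 2 - 4 * Real.sin (Real.pi * x) ^ 2)

theorem paaF_pos {I₀ : ℝ} (h : 2 < I₀) (x : ℝ) : 0 < paaF I₀ x := by
  apply Real.sqrt_pos.2
  nlinarith [Real.sin_sq_add_cos_sq (Real.pi * x), sq_nonneg (Real.cos (Real.pi * x))]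

theorem paaF_cont {I₀ : ℝ} (h : 2 < I₀) : Continuous (fun x => (paaF I₀ x)⁻¹) := by
  apply Continuous.inv₀
  · unfold paaF
    fun_prop
  · intro x
    exact ne_of_gt (paaF_pos h x)

/-- Time to reach the angle `x`. -/
def paaG (I₀ x : ℝ) : ℝ := ∫ y in (0 : ℝ)..x, (paaF I₀ y)⁻¹

theorem paaG_deriv {I₀ : ℝ} (h : 2 < I₀) (x : ℝ) :
    HasDerivAt (paaG I₀) (paaF I₀ x)⁻¹ x := by
  exact intervalIntegral.integral_hasDerivAt_right ((paaF_cont h).intervalIntegrable _ _)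
    ((paaF_cont h).stronglyMeasurableAtFilter _ _) (paaF_cont h).continuousAt

theorem paaG_mono {I₀ : ℝ} (h : 2 < I₀) : StrictMono (paaG I₀) := by
  apply strictMono_of_hasDerivAt_pos (paaG_deriv h)
  intro x
  exact inv_pos.2 (paaF_pos h x)

theorem paaG_symm {I₀ : ℝ} (h : 2 < I₀) (x : ℝ) :
    paaG I₀ (1 - x) = paaG I₀ 1 - paaG I₀ x := by
  have h1 : (∫ y in (0 : ℝ)..x, (paaF I₀ (1 - y))⁻¹) = ∫ y in (1 - x)..(1 - 0), (paaF I₀ y)⁻¹ :=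
    intervalIntegral.integral_comp_sub_left (fun y => (paaF I₀ y)⁻¹) 1
  have h2 : ∀ y, paaF I₀ (1 - y) = paaF I₀ y := by
    intro y
    unfold paaF
    rw [mul_sub, mul_one, Real.sin_pi_sub]
  simp only [h2, sub_zero] at h1
  have h3 := intervalIntegral.integral_add_adjacent_intervals (μ := MeasureTheory.volume)
    ((paaF_cont h).intervalIntegrable 0 (1 - x)) ((paaF_cont h).intervalIntegrable (1 - x) 1)
  unfold paaG
  rw [h1]
  linarith

/-- The separatrix orbit. -/
def paaS (s : ℝ) : ℝ := -(1 / 2) + (2 / Real.pi) * Real.arctan (Real.exp (2 * Real.pi * s))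

theorem paaS_deriv (s : ℝ) : HasDerivAt paaS (2 * Real.cos (Real.pi * paaS s)) s := by
  have h0 : HasDerivAt (fun s : ℝ => 2 * Real.pi * s) (2 * Real.pi) s := by
    simpa using (hasDerivAt_id s).const_mul (2 * Real.pi)
  have h1 := ((h0.exp.arctan).const_mul (2 / Real.pi)).const_add (-(1 / 2))
  have hpi := Real.pi_ne_zero
  refine HasDerivAt.congr_deriv (f := paaS) h1 ?_
  symm
  have e : Real.pi * paaS s = 2 * Real.arctan (Real.exp (2 * Real.pi * s)) - Real.pi / 2 := by
    unfold paaS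
    field_simp
    ring
  rw [e, Real.cos_sub_pi_div_two, Real.sin_two_mul, Real.sin_arctan, Real.cos_arctan]
  set u := Real.exp (2 * Real.pi * s)
  have hu : 0 < 1 + u ^ 2 := by positivity
  have hs : Real.sqrt (1 + u ^ 2) ≠ 0 := (Real.sqrt_pos.2 hu).ne'
  have hq : Real.sqrt (1 + u ^ 2) ^ 2 = 1 + u ^ 2 := Real.sq_sqrt hu.le
  field_simp
  rw [hq]

theorem paaG_sigma {I₀ : ℝ} (h : 2 < I₀) : paaG I₀ sigmaConst < 1 / 2 := by
  have hd : ∀ s, HasDerivAt (fun s => s - paaG I₀ (paaS s))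
      (1 - (paaF I₀ (paaS s))⁻¹ * (2 * Real.cos (Real.pi * paaS s))) s := fun s =>
    (hasDerivAt_id s).sub ((paaG_deriv h (paaS s)).comp s (paaS_deriv s))
  have hm : StrictMono (fun s => s - paaG I₀ (paaS s)) := by
    apply strictMono_of_hasDerivAt_pos hd
    intro s
    have hp := paaF_pos h (paaS s)
    have hlt : 2 * Real.cos (Real.pi * paaS s) < paaF I₀ (paaS s) := by
      apply Real.lt_sqrt_of_sq_lt
      nlinarith [Real.sin_sq_add_cos_sq (Real.pi * paaS s)]
    rw [sub_pos, inv_mul_lt_one₀ hp]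
    exact hlt
  have h1 := hm (show (0 : ℝ) < 1 / 2 by norm_num)
  have e0 : paaS 0 = 0 := by
    unfold paaS
    have := Real.pi_ne_zero
    rw [mul_zero, Real.exp_zero, Real.arctan_one]
    field_simp
    norm_num
  have e1 : paaS (1 / 2) = sigmaConst := by
    unfold paaS sigmaConst
    congr 4
    ring
  have e2 : paaG I₀ 0 = 0 := by simp [paaG]
  simp only [e0, e1, e2] at h1
  linarith

theorem paa_sigma : 0 < sigmaConst ∧ sigmaConst < 1 / 2 := by
  have hpi := Real.pi_pos
  have h1 : Real.pi / 4 < Real.arctan (Real.exp Real.pi) := by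
    rw [← Real.arctan_one]
    exact Real.arctan_strictMono (Real.one_lt_exp_iff.2 hpi)
  have h2 := Real.arctan_lt_pi_div_two (Real.exp Real.pi)
  have e : sigmaConst = -(1 / 2) + 2 * Real.arctan (Real.exp Real.pi) / Real.pi := by
    unfold sigmaConst
    ring
  rw [e]
  constructor
  · have : 1 / 2 < 2 * Real.arctan (Real.exp Real.pi) / Real.pi := by
      rw [lt_div_iff₀ hpi]
      linarith
    linarith
  · have : 2 * Real.arctan (Real.exp Real.pi) / Real.pi < 1 := by
      rw [div_lt_one hpi]
      linarith
    linarith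

/-- Time law along a lifted orbit starting at angle zero. -/
theorem paa_time {I₀ : ℝ} (h : 2 < I₀) (θ J : ℝ → ℝ) (h0 : θ 0 = 0) (hJ : J 0 = I₀)
    (hθ' : ∀ t, HasDerivAt θ (J t) t)
    (hJ' : ∀ t, HasDerivAt J (-(2 * Real.pi * Real.sin (2 * Real.pi * θ t))) t) (t : ℝ) :
    paaG I₀ (θ t) = t := by
  have hE : ∀ t, (J t) ^ 2 - 2 * Real.cos (2 * Real.pi * θ t) = I₀ ^ 2 - 2 := by
    intro t
    have hd : ∀ t, HasDerivAt (fun t => (J t) ^ 2 - 2 * Real.cos (2 * Real.pi * θ t)) 0 t := by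
      intro t
      have := ((hJ' t).pow 2).sub ((((hθ' t).const_mul (2 * Real.pi)).cos).const_mul 2)
      refine HasDerivAt.congr_deriv this ?_
      simp
      ring
    have := is_const_of_deriv_eq_zero (fun t => (hd t).differentiableAt) (fun t => (hd t).deriv) t 0
    simpa [h0, hJ] using this
  have hsq : ∀ t, (J t) ^ 2 = I₀ ^ 2 - 4 * Real.sin (Real.pi * θ t) ^ 2 := by
    intro t
    have h1 := hE t
    rw [mul_assoc, Real.cos_two_mul, Real.cos_sq'] at h1
    linarith
  have hpos2 : ∀ t, 0 < (J t) ^ 2 := by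
    intro t
    rw [hsq]
    exact Real.sqrt_pos.1 (paaF_pos h (θ t))
  have hcont : Continuous J := continuous_iff_continuousAt.2 fun t => (hJ' t).continuousAt
  have hpos : ∀ t, 0 < J t := by
    intro t
    by_contra hneg
    push Not at hneg
    have : (0 : ℝ) ∈ Set.range J :=
      mem_range_of_exists_le_of_exists_ge hcont ⟨t, hneg⟩ ⟨0, by rw [hJ]; linarith⟩
    obtain ⟨s, hs⟩ := this
    have := hpos2 s
    rw [hs] at this
    norm_num at this
  have hF : ∀ t, paaF I₀ (θ t) = J t := by
    intro t
    unfold paaF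
    rw [← hsq, Real.sqrt_sq (hpos t).le]
  have hd : ∀ t, HasDerivAt (fun t => paaG I₀ (θ t) - t) 0 t := by
    intro t
    have := ((paaG_deriv h (θ t)).comp t (hθ' t)).sub (hasDerivAt_id t)
    refine HasDerivAt.congr_deriv this ?_
    rw [hF, inv_mul_cancel₀ (hpos t).ne', sub_self]
  have := is_const_of_deriv_eq_zero (fun t => (hd t).differentiableAt) (fun t => (hd t).deriv) t 0
  simp [h0, paaG] at this
  unfold paaG
  linarith

/-- Along the `M`-periodic rotational orbit of the pendulum through `(0, I_M)`, the angle
`θ_M(t)` stays outside the arc `[−σ, σ] (mod 1)` for all `t ∈ [1/2, M − 1/2]`, where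
`σ = −1/2 + (2/π)·arctan(e^π) ∈ (0, 1/2)`. -/
theorem pendulum_avoids_arc :
    (0 < sigmaConst ∧ sigmaConst < 1 / 2) ∧
    ∀ Φ : ℝ → T1 × ℝ → T1 × ℝ, IsHamFlow1 Pend Φ →
      ∀ M : ℕ, 1 ≤ M → ∀ I₀ ∈ Set.Ioo (2 : ℝ) 3, traversalTime I₀ = M →
        ∀ t ∈ Set.Icc (1 / 2 : ℝ) ((M : ℝ) - 1 / 2),
          (Φ t (((0 : ℝ) : T1), I₀)).1 ∉
            (fun r : ℝ => (r : T1)) '' Set.Icc (-sigmaConst) sigmaConst := by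
  refine ⟨paa_sigma, ?_⟩
  rintro Φ ⟨hΦ0, -, hΦ⟩ M - I₀ ⟨hI, -⟩ hT t ⟨ht1, ht2⟩ ⟨r, ⟨hr1, hr2⟩, hr⟩
  obtain ⟨c, hc, hc'⟩ := hΦ (((0 : ℝ) : T1), I₀)
  have hc0 := hc 0
  rw [hΦ0] at hc0
  have ha : ((c 0).1 : T1) = ((0 : ℝ) : T1) := congrArg Prod.fst hc0
  have hb : (c 0).2 = I₀ := congrArg Prod.snd hc0
  obtain ⟨n, hn⟩ := paa_int ha
  have hct : ((c t).1 : T1) = (r : T1) := by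
    rw [show ((c t).1 : T1) = (Φ t (((0 : ℝ) : T1), I₀)).1 from congrArg Prod.fst (hc t)]
    exact hr.symm
  obtain ⟨m, hm⟩ := paa_int hct
  have hG : paaG I₀ ((c t).1 - n) = t := by
    apply paa_time hI (fun s => (c s).1 - n) (fun s => (c s).2)
    · simp [hn]
    · exact hb
    · intro s
      have := (hc' s).1.sub_const (n : ℝ)
      rw [paa_fderiv] at this
      simpa using this
    · intro s
      have := (hc' s).2
      rw [paa_fderiv] at this
      have e : Real.sin (2 * Real.pi * ((c s).1 - n)) = Real.sin (2 * Real.pi * (c s).1) := by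
        rw [mul_sub, mul_comm (2 * Real.pi) (n : ℝ)]
        exact Real.sin_sub_int_mul_two_pi _ n
      simp only [e]
      simpa using this
  have hs := paaG_sigma hI
  have hG1 : paaG I₀ 1 = M := hT
  have hlow : sigmaConst < (c t).1 - n := by
    rw [← (paaG_mono hI).lt_iff_lt, hG]
    linarith
  have hup : (c t).1 - n < 1 - sigmaConst := by
    rw [← (paaG_mono hI).lt_iff_lt, hG, paaG_symm hI, hG1]
    linarith
  have k1 : (0 : ℝ) < ((m - n : ℤ) : ℝ) := by
    push_cast
    linarith
  have k2 : ((m - n : ℤ) : ℝ) < ((1 : ℤ) : ℝ) := by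
    push_cast
    linarith
  have k1' : 0 < m - n := by exact_mod_cast k1
  have k2' : m - n < 1 := by exact_mod_cast k2
  omega
end
end

section
/- For p ∈ ℕ*, the analytic function η_p : 𝕋 → ℝ defined by η_p(θ) = ( (1/p) Σ_{l=0}^{p−1} cos(2πlθ) )² satisfies η_p(0) = 1, η_p'(0) = 0, and η_p(k/p) = 0, η_p'(k/p) = 0 for every 1 ≤ k ≤ p−1. Moreover, for every α ≥ 1 and L₁ > 0 its Gevrey norm satisfies |η_p|_{α,L₁} ≤ exp(2αL₁(2πp)^{1/α}). -/
open scoped BigOperators ENNReal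
open Real

noncomputable section

/-- Gevrey-(α, L) norm of a real function on a set `J ⊆ ℝ`, as an extended real:
`|f|_{α,L} = Σ_{l ∈ ℕ} L^{lα} (l!)^{−α} sup_J |f^{(l)}|`. -/
noncomputable def gevreyNorm1 (α L : ℝ) (J : Set ℝ) (f : ℝ → ℝ) : ℝ≥0∞ :=
  ∑' l : ℕ,
    ENNReal.ofReal (L ^ (α * (l : ℝ)) / ((Nat.factorial l : ℝ) ^ α) *
      ⨆ x : J, |deriv^[l] f x.1|)

/-- The trigonometric function `η_p(θ) = ((1/p) Σ_{l=0}^{p−1} cos(2πlθ))²`, viewed as a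
`1`-periodic function on `ℝ` (i.e. a function on `𝕋 = ℝ/ℤ`). -/
noncomputable def eta (p : ℕ) : ℝ → ℝ :=
  fun θ => ((1 / (p : ℝ)) * ∑ l ∈ Finset.range p, Real.cos (2 * Real.pi * (l : ℝ) * θ)) ^ 2

/-- Iterated derivatives of a trigonometric sum. -/
lemma iter_deriv_trig {ι : Type} (s : Finset ι) (c : ℝ) (w v : ι → ℝ) (l : ℕ) :
    deriv^[l] (fun θ : ℝ => ∑ i ∈ s, c * (Real.cos (w i * θ) + Real.cos (v i * θ))) =
      fun θ : ℝ => ∑ i ∈ s, c * (w i ^ l * Real.cos (w i * θ + l * (π / 2)) +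
        v i ^ l * Real.cos (v i * θ + l * (π / 2))) := by
  induction l with
  | zero => simp
  | succ l ih =>
    rw [Function.iterate_succ_apply', ih]
    funext θ
    have key : ∀ (a b x : ℝ), HasDerivAt (fun θ : ℝ => a ^ l * Real.cos (a * θ + b))
        (a ^ (l + 1) * Real.cos (a * x + (b + π / 2))) x := by
      intro a b x
      have h1 : HasDerivAt (fun θ : ℝ => a * θ + b) a x := by
        simpa using ((hasDerivAt_id x).const_mul a).add_const b
      have h2 := (h1.cos).const_mul (a ^ l)
      have e3 : a ^ (l + 1) * Real.cos (a * x + (b + π / 2)) =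
          a ^ l * (-Real.sin (a * x + b) * a) := by
        rw [← add_assoc, Real.cos_add_pi_div_two]
        ring
      rw [e3]
      exact h2
    have h := HasDerivAt.fun_sum (u := s) (x := θ) (fun i _ =>
      ((key (w i) (l * (π / 2)) θ).add (key (v i) (l * (π / 2)) θ)).const_mul c)
    have h' := h.deriv
    have e : ((l + 1 : ℕ) : ℝ) * (π / 2) = l * (π / 2) + π / 2 := by push_cast; ring
    rw [e]
    exact h'

lemma eta_expand (p : ℕ) : eta p = fun θ : ℝ =>
    ∑ i ∈ Finset.range p ×ˢ Finset.range p, (1 / (2 * (p : ℝ) ^ 2)) *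
      (Real.cos ((2 * π * ((i.1 : ℝ) + i.2)) * θ) +
        Real.cos ((2 * π * ((i.1 : ℝ) - i.2)) * θ)) := by
  funext θ
  unfold eta
  rw [mul_pow, sq (∑ l ∈ Finset.range p, _), Finset.sum_mul_sum, ← Finset.sum_product',
    Finset.mul_sum]
  refine Finset.sum_congr rfl fun i _ => ?_
  have e1 : (2 * π * ((i.1 : ℝ) + i.2)) * θ = 2 * π * i.1 * θ + 2 * π * i.2 * θ := by ring
  have e2 : (2 * π * ((i.1 : ℝ) - i.2)) * θ = 2 * π * i.1 * θ - 2 * π * i.2 * θ := by ring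
  rw [e1, e2, Real.cos_add, Real.cos_sub]
  have : (1 / (2 * (p : ℝ) ^ 2)) = (1 / (p : ℝ)) ^ 2 / 2 := by
    rw [one_div, one_div, mul_inv, inv_pow]; ring
  rw [this]
  ring

lemma eta_deriv_bound (p : ℕ) (hp : 1 ≤ p) (l : ℕ) (θ : ℝ) :
    |deriv^[l] (eta p) θ| ≤ (4 * π * p) ^ l := by
  have hp0 : (0 : ℝ) < p := by exact_mod_cast hp
  rw [eta_expand, iter_deriv_trig]
  have hb : ∀ a b : ℝ, |a| ≤ 4 * π * p → |a ^ l * Real.cos b| ≤ (4 * π * p) ^ l := by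
    intro a b ha
    rw [abs_mul, abs_pow]
    calc |a| ^ l * |Real.cos b| ≤ |a| ^ l * 1 := by gcongr; exact Real.abs_cos_le_one b
      _ ≤ _ := by rw [mul_one]; gcongr
  refine (Finset.abs_sum_le_sum_abs _ _).trans ?_
  calc _ ≤ ∑ i ∈ Finset.range p ×ˢ Finset.range p,
        (1 / (2 * (p : ℝ) ^ 2)) * (2 * (4 * π * p) ^ l) := by
        refine Finset.sum_le_sum fun i hi => ?_
        rw [Finset.mem_product, Finset.mem_range, Finset.mem_range] at hi
        have h1 : (i.1 : ℝ) ≤ p := by exact_mod_cast hi.1.le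
        have h2 : (i.2 : ℝ) ≤ p := by exact_mod_cast hi.2.le
        have h10 : (0 : ℝ) ≤ i.1 := by positivity
        have h20 : (0 : ℝ) ≤ i.2 := by positivity
        rw [abs_mul, abs_of_nonneg (by positivity : (0 : ℝ) ≤ 1 / (2 * (p : ℝ) ^ 2))]
        gcongr
        refine (abs_add_le _ _).trans ?_
        rw [two_mul ((4 * π * p) ^ l)]
        refine add_le_add (hb _ _ ?_) (hb _ _ ?_)
        · rw [abs_mul, abs_of_pos Real.two_pi_pos]
          have : |(i.1 : ℝ) + i.2| ≤ 2 * p := by rw [abs_le]; constructor <;> linarith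
          nlinarith [Real.two_pi_pos]
        · rw [abs_mul, abs_of_pos Real.two_pi_pos]
          have : |(i.1 : ℝ) - i.2| ≤ 2 * p := by rw [abs_le]; constructor <;> linarith
          nlinarith [Real.two_pi_pos]
    _ = (4 * π * p) ^ l := by
        rw [Finset.sum_const, Finset.card_product, Finset.card_range, nsmul_eq_mul]
        push_cast
        field_simp

lemma cos_sum_hasDerivAt (p : ℕ) (x : ℝ) :
    HasDerivAt (fun θ : ℝ => (1 / (p : ℝ)) * ∑ l ∈ Finset.range p,
        Real.cos (2 * Real.pi * (l : ℝ) * θ))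
      ((1 / (p : ℝ)) * ∑ l ∈ Finset.range p,
        (-Real.sin (2 * π * (l : ℝ) * x) * (2 * π * l))) x := by
  refine (HasDerivAt.fun_sum fun i _ => ?_).const_mul _
  have h1 : HasDerivAt (fun θ : ℝ => 2 * π * (i : ℝ) * θ) (2 * π * i) x := by
    simpa using (hasDerivAt_id x).const_mul (2 * π * (i : ℝ))
  exact h1.cos

lemma cos_sum_zero (p k : ℕ) (hk : 1 ≤ k) (hkp : k < p) :
    ∑ l ∈ Finset.range p, Real.cos (2 * π * (l : ℝ) * ((k : ℝ) / p)) = 0 := by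
  have hp : p ≠ 0 := by omega
  have hζ := Complex.isPrimitiveRoot_exp p hp
  set ζ := Complex.exp (2 * π * Complex.I / p) with hz
  have hne : ζ ^ k ≠ 1 := hζ.pow_ne_one_of_pos_of_lt (by omega) hkp
  have hone : (ζ ^ k) ^ p = 1 := by rw [← pow_mul, mul_comm, pow_mul, hζ.pow_eq_one, one_pow]
  have hg : ∑ l ∈ Finset.range p, (ζ ^ k) ^ l = 0 := by
    rw [geom_sum_eq hne, hone]; simp
  have hre := congrArg Complex.re hg
  rw [Complex.re_sum, Complex.zero_re] at hre
  rw [← hre]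
  refine Finset.sum_congr rfl fun l _ => ?_
  rw [← pow_mul, hz, ← Complex.exp_nat_mul, ← Complex.exp_ofReal_mul_I_re]
  congr 2
  push_cast
  ring

lemma term_bound (α L C : ℝ) (hα : 1 ≤ α) (hL : 0 < L) (hC : 0 < C) (l : ℕ) :
    L ^ (α * (l : ℝ)) / ((Nat.factorial l : ℝ) ^ α) * C ^ l ≤
      Real.exp (L * C ^ (1 / α)) ^ (α - 1) *
        ((L * C ^ (1 / α)) ^ l / (Nat.factorial l : ℝ)) := by
  set x := L * C ^ (1 / α) with hx
  have hx0 : 0 < x := by positivity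
  have hα0 : α ≠ 0 := by linarith
  have hf : (0 : ℝ) < Nat.factorial l := by positivity
  have e : L ^ (α * (l : ℝ)) / ((Nat.factorial l : ℝ) ^ α) * C ^ l =
      (x ^ l / (Nat.factorial l : ℝ)) ^ α := by
    rw [Real.div_rpow (by positivity) hf.le, hx, mul_pow,
      Real.mul_rpow (by positivity) (by positivity), ← Real.rpow_natCast L,
      ← Real.rpow_natCast (C ^ (1 / α)), ← Real.rpow_mul hL.le, ← Real.rpow_mul hC.le,
      ← Real.rpow_mul hC.le, ← Real.rpow_natCast C]
    have : 1 / α * (l : ℝ) * α = l := by field_simp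
    rw [this, mul_comm α (l : ℝ)]
    ring
  have ha : 0 < x ^ l / (Nat.factorial l : ℝ) := by positivity
  have hle : x ^ l / (Nat.factorial l : ℝ) ≤ Real.exp x := Real.pow_div_factorial_le_exp x hx0.le l
  rw [e]
  calc (x ^ l / (Nat.factorial l : ℝ)) ^ α
      = (x ^ l / (Nat.factorial l : ℝ)) ^ (α - 1) * (x ^ l / (Nat.factorial l : ℝ)) := by
        rw [Real.rpow_sub_one ha.ne', div_mul_cancel₀ _ ha.ne']
    _ ≤ _ := by
        gcongr

lemma gevrey_bound (p : ℕ) (hp : 1 ≤ p) (α L : ℝ) (hα : 1 ≤ α) (hL : 0 < L) :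
    gevreyNorm1 α L Set.univ (eta p) ≤
      ENNReal.ofReal (Real.exp (2 * α * L * (2 * Real.pi * p) ^ (1 / α))) := by
  have hp0 : (0 : ℝ) < p := by exact_mod_cast hp
  have hC : 0 < 4 * π * p := by positivity
  set x := L * (4 * π * p) ^ (1 / α) with hx
  have hx0 : 0 < x := by positivity
  have hs : HasSum (fun l : ℕ => Real.exp x ^ (α - 1) * (x ^ l / (Nat.factorial l : ℝ)))
      (Real.exp x ^ (α - 1) * Real.exp x) := by
    refine HasSum.mul_left _ ?_
    have := NormedSpace.expSeries_div_hasSum_exp (𝔸 := ℝ) x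
    rwa [← Real.exp_eq_exp_ℝ] at this
  unfold gevreyNorm1
  calc _ ≤ ∑' l : ℕ, ENNReal.ofReal (Real.exp x ^ (α - 1) * (x ^ l / (Nat.factorial l : ℝ))) := by
        refine ENNReal.tsum_le_tsum fun l => ENNReal.ofReal_le_ofReal ?_
        refine le_trans ?_ (term_bound α L (4 * π * p) hα hL hC l)
        gcongr
        exact ciSup_le fun y => eta_deriv_bound p hp l y.1
    _ = ENNReal.ofReal (Real.exp x ^ (α - 1) * Real.exp x) := by
        rw [← hs.tsum_eq, ENNReal.ofReal_tsum_of_nonneg (fun l => by positivity) hs.summable]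
    _ ≤ _ := by
        refine ENNReal.ofReal_le_ofReal ?_
        rw [Real.rpow_sub_one (Real.exp_pos x).ne', div_mul_cancel₀ _ (Real.exp_pos x).ne',
          ← Real.exp_mul]
        refine Real.exp_le_exp.mpr ?_
        have h2 : (2 : ℝ) ^ (1 / α) ≤ 2 := by
          calc (2 : ℝ) ^ (1 / α) ≤ 2 ^ (1 : ℝ) := by
                refine Real.rpow_le_rpow_of_exponent_le (by norm_num) ?_
                rw [div_le_one (by linarith)]; exact hα
            _ = 2 := Real.rpow_one 2
        have e : 4 * π * p = 2 * (2 * π * p) := by ring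
        rw [hx, e, Real.mul_rpow (by norm_num) (by positivity)]
        have hD : 0 ≤ α * L * (2 * π * p) ^ (1 / α) := by positivity
        nlinarith [mul_le_mul_of_nonneg_right h2 hD]

/-- Properties of `η_p`: it is `1`-periodic, `η_p(0) = 1`, `η_p'(0) = 0`,
`η_p(k/p) = η_p'(k/p) = 0` for `1 ≤ k ≤ p−1`, and its Gevrey norm satisfies
`|η_p|_{α,L₁} ≤ exp(2αL₁(2πp)^{1/α})` for every `α ≥ 1`, `L₁ > 0`. -/
theorem eta_properties (p : ℕ) (hp : 1 ≤ p) :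
    Function.Periodic (eta p) 1 ∧
    eta p 0 = 1 ∧ deriv (eta p) 0 = 0 ∧
    (∀ k : ℕ, 1 ≤ k → k ≤ p - 1 →
      eta p ((k : ℝ) / p) = 0 ∧ deriv (eta p) ((k : ℝ) / p) = 0) ∧
    (∀ α L₁ : ℝ, 1 ≤ α → 0 < L₁ →
      gevreyNorm1 α L₁ Set.univ (eta p) ≤
        ENNReal.ofReal (Real.exp (2 * α * L₁ * (2 * Real.pi * p) ^ (1 / α)))) := by
  have hp0 : (p : ℝ) ≠ 0 := by
    have : p ≠ 0 := by omega
    exact_mod_cast this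
  have hd : ∀ x : ℝ, deriv (eta p) x = _ := fun x => ((cos_sum_hasDerivAt p x).pow 2).deriv
  refine ⟨?_, ?_, ?_, ?_, fun α L hα hL => gevrey_bound p hp α L hα hL⟩
  · intro θ
    unfold eta
    congr 2
    refine Finset.sum_congr rfl fun l _ => ?_
    rw [← Real.cos_add_nat_mul_two_pi (2 * π * (l : ℝ) * θ) l]
    congr 1
    ring
  · simp [eta, hp0]
  · rw [hd]
    simp
  · intro k hk hkp
    have h0 := cos_sum_zero p k hk (by omega)
    constructor
    · unfold eta
      rw [h0]
      simp
    · rw [hd, h0]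
      simp
end
end

section
/- Let (p_j)_{j≥0} be the increasing sequence of prime numbers, let n ≥ 3 and set N_n = p_{n+3}·p_{n+4}⋯p_{2n}. Let G_n = Φ^{½(I₂²+I₃²+⋯+I_{n−1}²) + N_n^{−2}V(θ₂)} be the time-one map on 𝔸^{n−2} of the Hamiltonian ½(I₂²+⋯+I_{n−1}²) + N_n^{−2}V(θ₂), with V(θ) = −cos(2πθ). Then for every α > 1 and L₁ > 0 there exist a function g_n ∈ G^{α,L₁}(𝔸^{n−2}) depending only on the angle variables, a point a_n ∈ 𝔸^{n−2}, and positive constants c₁, c₂ depending only on α and L₁, such that with M_n = 2·⌊c₁ N_n exp(c₂(n−2) p_{2n}^{1/α})⌋ and q_n = N_n M_n: the point a_n is q_n-periodic for G_n; the synchronization conditions g_n(a_n) = 1, dg_n(a_n) = 0, g_n(G_n^k(a_n)) = 0 and dg_n(G_n^k(a_n)) = 0 hold for all 1 ≤ k ≤ q_n − 1; and q_n^{−1}|g_n|_{α,L₁} ≤ N_n^{−2}. -/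
open scoped BigOperators ENNReal
open Real

noncomputable section

/-- Projection of `ℝ^N` onto the torus `𝕋^N`. -/
noncomputable def projVec (N : ℕ) : (Fin N → ℝ) → (Fin N → T1) := fun x i => (x i : T1)

/-- Directional derivative operator: `dDir v f x = df(x)·v`. -/
noncomputable def dDir {E : Type*} [NormedAddCommGroup E] [NormedSpace ℝ E]
    (v : E) (f : E → ℝ) : E → ℝ :=
  fun x => fderiv ℝ f x v

/-- Iterated directional derivative along a list of directions. -/
noncomputable def derivAlong {E : Type*} [NormedAddCommGroup E] [NormedSpace ℝ E]
    (l : List E) (f : E → ℝ) : E → ℝ :=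
  l.foldr dDir f

/-- The list of coordinate directions associated to a multi-index `k ∈ ℕ^N` on `ℝ^N`. -/
noncomputable def vecDirs (N : ℕ) (k : Fin N → ℕ) : List (Fin N → ℝ) :=
  (List.finRange N).flatMap fun i => List.replicate (k i) (Pi.single i 1)

/-- The Gevrey-(α, L) norm `Σ_{k} L^{|k|α}(k!)^{−α}‖∂^k u‖_{C⁰}` of a function on the
torus `𝕋^N`, viewed as a `ℤ^N`-periodic function on `ℝ^N`.  For a function of the angle
variables only, this is its Gevrey norm as a function on the annulus `𝔸^N`. -/
noncomputable def gevreyNormTor (N : ℕ) (α L : ℝ) (u : (Fin N → ℝ) → ℝ) : ℝ≥0∞ :=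
  ∑' k : Fin N → ℕ,
    ENNReal.ofReal
      (L ^ (α * (((∑ i, k i : ℕ)) : ℝ)) / (((∏ i, Nat.factorial (k i) : ℕ)) : ℝ) ^ α *
        ⨆ x : Fin N → ℝ, |derivAlong (vecDirs N k) u x|)


lemma gcd_prime_bound (α : ℝ) (hα : 1 < α) : ∃ C : ℝ, 0 < C ∧ ∀ n : ℕ, 3 ≤ n →
    ((Nat.nth Nat.Prime (2 * n) : ℝ) ^ (1 / α)) ≤ C * n := by
  set ε : ℝ := 1 - 1 / α with hε
  have h1 : 1 / α < 1 := by rw [div_lt_one (by linarith)]; exact hα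
  have hεpos : 0 < ε := by linarith
  refine ⟨24 / ε, by positivity, fun n hn => ?_⟩
  set P := Nat.nth Nat.Prime (2 * n) with hP
  have hcount : Nat.primeCounting P = 2 * n + 1 := by
    have := Nat.primeCounting'_nth_eq (2 * n)
    rw [Nat.primeCounting, Nat.primeCounting', Nat.count_succ]
    rw [Nat.primeCounting'] at this
    rw [this]
    simp [hP, Nat.prime_nth_prime]
  have hge := Chebyshev.pi_ge P
  have hP11 : 11 ≤ P := by
    have h4 : Nat.nth Nat.Prime 4 = 11 := Nat.nth_count (p := Nat.Prime) (by norm_num : Nat.Prime 11) ▸ by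
      congr 1
    rw [← h4]
    exact (Nat.nth_monotone Nat.infinite_setOfPred_prime) (by omega)
  have hPR : (11 : ℝ) ≤ P := by exact_mod_cast hP11
  have hlogpos : 0 < Real.log P := Real.log_pos (by linarith)
  rw [div_le_iff₀ hlogpos, hcount] at hge
  have hl1 : Real.log (P + 1) ≤ 3 * Real.log 2 + (P + 1) / 8 - 1 := by
    have := Real.log_le_sub_one_of_pos (x := ((P : ℝ) + 1) / 8) (by positivity)
    rw [Real.log_div (by positivity) (by norm_num)] at this
    have h8 : Real.log 8 = 3 * Real.log 2 := by
      rw [show (8 : ℝ) = 2 ^ 3 by norm_num, Real.log_pow]; norm_num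
    linarith
  have hlog2 := Real.log_two_gt_d9
  have hA : (P : ℝ) / 8 ≤ (2 * n + 1) * Real.log P := by
    push_cast at hge
    nlinarith
  have hl2 : Real.log P ≤ (P : ℝ) ^ ε / ε := Real.log_le_rpow_div (by positivity) hεpos
  have hn' : (3 : ℝ) ≤ n := by exact_mod_cast hn
  have hB : (P : ℝ) / 8 ≤ 3 * n * ((P : ℝ) ^ ε / ε) :=
    hA.trans (mul_le_mul (by linarith) hl2 hlogpos.le (by positivity))
  have hsplit : (P : ℝ) = (P : ℝ) ^ (1 / α) * (P : ℝ) ^ ε := by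
    rw [← Real.rpow_add (by linarith), hε]; simp
  have hpe : 0 < (P : ℝ) ^ ε := by positivity
  have : (P : ℝ) ^ (1 / α) * (P : ℝ) ^ ε ≤ 24 / ε * n * (P : ℝ) ^ ε := by
    rw [← hsplit]
    calc (P : ℝ) = 8 * (P / 8) := by ring
      _ ≤ 8 * (3 * n * ((P : ℝ) ^ ε / ε)) := by linarith
      _ = _ := by ring
  exact le_of_mul_le_mul_right this hpe

/-- speed of the pendulum at angle `θ` at energy `1 + exp r` -/
def pw (r θ : ℝ) : ℝ := Real.sqrt (2 * (1 + Real.exp r + Real.cos (2 * π * θ)))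

lemma pw_arg_pos (r θ : ℝ) : 0 < 2 * (1 + Real.exp r + Real.cos (2 * π * θ)) := by
  have := Real.neg_one_le_cos (2 * π * θ)
  have := Real.exp_pos r
  linarith

lemma pw_pos (r θ : ℝ) : 0 < pw r θ := Real.sqrt_pos.2 (pw_arg_pos r θ)

lemma pw_cont : Continuous (fun x : ℝ × ℝ => 1 / pw x.1 x.2) := by
  refine Continuous.div continuous_const ?_ (fun x => (pw_pos _ _).ne')
  unfold pw
  fun_prop

lemma pw_cont' (r : ℝ) : Continuous (fun x : ℝ => 1 / pw r x) :=
  pw_cont.comp (by fun_prop : Continuous fun x : ℝ => (r, x))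

lemma pw_per (r : ℝ) : Function.Periodic (fun x : ℝ => 1 / pw r x) 1 := by
  intro x
  simp only [pw]
  rw [show 2 * π * (x + 1) = 2 * π * x + 2 * π by ring, Real.cos_add_two_pi]

lemma pw_hasDeriv (r θ : ℝ) : HasDerivAt (pw r) (-(2 * π * Real.sin (2 * π * θ)) / pw r θ) θ := by
  have h1 : HasDerivAt (fun θ : ℝ => 2 * (1 + Real.exp r + Real.cos (2 * π * θ)))
      (2 * (-Real.sin (2 * π * θ) * (2 * π))) θ := by
    have h := ((hasDerivAt_id θ).const_mul (2 * π)).cos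
    simp only [id, mul_one] at h
    exact (h.const_add _).const_mul 2
  have h2 := h1.sqrt (pw_arg_pos r θ).ne'
  have h3 : HasDerivAt (pw r) (2 * (-Real.sin (2 * π * θ) * (2 * π)) / (2 * pw r θ)) θ := h2
  convert h3 using 1
  have := (pw_pos r θ).ne'
  field_simp

lemma pw_period_exists (T : ℝ) (hT : 1 ≤ T) : ∃ r : ℝ, ∫ x in (0:ℝ)..1, 1 / pw r x = T := by
  have hcont : Continuous (fun r : ℝ => ∫ x in (0:ℝ)..1, 1 / pw r x) :=
    intervalIntegral.continuous_parametric_intervalIntegral_of_continuous' (by simpa [Function.uncurry_def] using pw_cont) 0 1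
  have hlow : ∫ x in (0:ℝ)..1, 1 / pw 0 x ≤ T := by
    have : ∫ x in (0:ℝ)..1, 1 / pw 0 x ≤ ∫ x in (0:ℝ)..1, (1:ℝ) := by
      apply intervalIntegral.integral_mono_on (by norm_num) ((pw_cont' 0).intervalIntegrable _ _)
        (by simp)
      intro x _
      rw [div_le_one (pw_pos _ _)]
      unfold pw
      rw [Real.one_le_sqrt]
      have := Real.neg_one_le_cos (2 * π * x)
      simp only [Real.exp_zero]
      linarith
    simp only [intervalIntegral.integral_const, sub_zero, smul_eq_mul, mul_one] at this
    linarith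
  set δ : ℝ := Real.exp (-(7 * T)) / 2 with hδ
  have hδpos : 0 < δ := by positivity
  have hδle : δ ≤ 1 / 2 := by
    have : Real.exp (-(7 * T)) ≤ 1 := Real.exp_le_one_iff.2 (by linarith)
    linarith
  have hhigh : T ≤ ∫ x in (0:ℝ)..1, 1 / pw (Real.log (δ ^ 2)) x := by
    set r := Real.log (δ ^ 2)
    have her : Real.exp r = δ ^ 2 := Real.exp_log (by positivity)
    have h1 : ∫ x in (1 / 2 + δ)..1, 1 / pw r x ≤ ∫ x in (0:ℝ)..1, 1 / pw r x := by
      apply intervalIntegral.integral_mono_interval (by linarith) (by linarith) le_rfl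
      · exact Filter.Eventually.of_forall fun x => by have := pw_pos r x; positivity
      · exact (pw_cont' r).intervalIntegrable _ _
    have hFTC : ∫ x in (1 / 2 + δ)..1, 1 / (7 * (x - 1 / 2)) = T := by
      have hd : ∀ x ∈ Set.uIcc (1 / 2 + δ) 1, HasDerivAt (fun x => Real.log (x - 1 / 2) / 7)
          (1 / (7 * (x - 1 / 2))) x := by
        intro x hx
        rw [Set.uIcc_of_le (by linarith)] at hx
        have hne : x - 1 / 2 ≠ 0 := by have := hx.1; intro h; linarith
        have := (((hasDerivAt_id x).sub_const (1 / 2)).log hne).div_const 7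
        refine HasDerivAt.congr_deriv this ?_
        simp only [id]
        field_simp
      rw [intervalIntegral.integral_eq_sub_of_hasDerivAt hd]
      · rw [show (1 / 2 + δ - 1 / 2) = δ by ring, show (1 - 1 / 2 : ℝ) = 1 / 2 by norm_num, hδ,
          Real.log_div (Real.exp_pos _).ne' (by norm_num), Real.log_exp,
          Real.log_div (by norm_num) (by norm_num), Real.log_one]
        ring
      · apply ContinuousOn.intervalIntegrable
        apply ContinuousOn.div continuousOn_const (by fun_prop)
        intro x hx
        rw [Set.uIcc_of_le (by linarith)] at hx
        have := hx.1
        have : 0 < x - 1 / 2 := by linarith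
        positivity
    rw [← hFTC]
    refine le_trans ?_ h1
    apply intervalIntegral.integral_mono_on (by linarith)
    · apply ContinuousOn.intervalIntegrable
      apply ContinuousOn.div continuousOn_const (by fun_prop)
      intro x hx
      rw [Set.uIcc_of_le (by linarith)] at hx
      have := hx.1
      have : 0 < x - 1 / 2 := by linarith
      positivity
    · exact (pw_cont' r).intervalIntegrable _ _
    · intro x hx
      have hu : 0 < x - 1 / 2 := by have := hx.1; linarith
      apply one_div_le_one_div_of_le (pw_pos _ _)
      unfold pw
      rw [Real.sqrt_le_left (by positivity), her]
      have hcos : Real.cos (2 * π * x) = 2 * Real.sin (π * (x - 1 / 2)) ^ 2 - 1 := by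
        rw [show 2 * π * x = 2 * (π * (x - 1 / 2)) + π by ring, Real.cos_add_pi, Real.cos_two_mul,
          Real.cos_sq']
        ring
      rw [hcos]
      have hs : Real.sin (π * (x - 1 / 2)) ^ 2 ≤ (π * (x - 1 / 2)) ^ 2 :=
        sq_le_sq.2 Real.abs_sin_le_abs
      have hδ2 : δ ^ 2 ≤ (x - 1 / 2) ^ 2 := by
        have := hx.1
        apply pow_le_pow_left₀ hδpos.le; linarith
      have hpi : π ^ 2 ≤ 10 := by
        have := Real.pi_lt_d2; have := Real.pi_pos; nlinarith
      have : π ^ 2 * (x - 1 / 2) ^ 2 ≤ 10 * (x - 1 / 2) ^ 2 := by gcongr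
      rw [mul_pow] at hs
      nlinarith [sq_nonneg (x - 1 / 2)]
  obtain ⟨r, hr⟩ := mem_range_of_exists_le_of_exists_ge hcont ⟨0, hlow⟩ ⟨_, hhigh⟩
  exact ⟨r, hr⟩

lemma pendulum_orbit (T : ℝ) (hT : 1 ≤ T) : ∃ Θ v : ℝ → ℝ, Θ 0 = 0 ∧
    (∀ τ, Θ (τ + T) = Θ τ + 1) ∧ (∀ τ, v (τ + T) = v τ) ∧
    (∀ τ, HasDerivAt Θ (v τ) τ) ∧
    (∀ τ, HasDerivAt v (-(2 * π * Real.sin (2 * π * Θ τ))) τ) ∧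
    ∀ τ, 1 / 17 ≤ τ → τ ≤ T - 1 / 17 → 1 / 17 ≤ Θ τ ∧ Θ τ ≤ 16 / 17 := by
  obtain ⟨r, hr⟩ := pw_period_exists T hT
  set tau : ℝ → ℝ := fun θ => ∫ x in (0:ℝ)..θ, 1 / pw r x with htau
  have hder : ∀ θ, HasDerivAt tau (1 / pw r θ) θ := fun θ =>
    intervalIntegral.integral_hasDerivAt_right ((pw_cont' r).intervalIntegrable _ _)
      ((pw_cont' r).stronglyMeasurableAtFilter _ _) (pw_cont' r).continuousAt
  have hmono : StrictMono tau := strictMono_of_hasDerivAt_pos hder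
    (fun θ => one_div_pos.2 (pw_pos r θ))
  have hcont : Continuous tau := continuous_iff_continuousAt.2 fun θ => (hder θ).continuousAt
  have hper : ∀ θ, tau (θ + 1) = tau θ + T := by
    intro θ
    have h1 := (pw_per r).intervalIntegral_add_eq θ 0
    rw [zero_add, hr] at h1
    rw [← h1]
    exact (intervalIntegral.integral_add_adjacent_intervals
      ((pw_cont' r).intervalIntegrable _ _) ((pw_cont' r).intervalIntegrable _ _)).symm
  have h0 : tau 0 = 0 := by simp [htau]
  have hnat : ∀ k : ℕ, tau k = k * T := by
    intro k
    induction k with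
    | zero => simp [h0]
    | succ k ih => push_cast; rw [hper, ih]; ring
  have hnat' : ∀ k : ℕ, tau (-k) = -(k * T) := by
    intro k
    induction k with
    | zero => simp [h0]
    | succ k ih =>
      have := hper (-((k + 1 : ℕ) : ℝ))
      rw [show (-((k + 1 : ℕ) : ℝ) + 1) = -k by push_cast; ring, ih] at this
      push_cast at *
      linarith
  have hsurj : Function.Surjective tau := by
    intro y
    obtain ⟨k, hk⟩ := exists_nat_gt |y|
    have hk0 : (0 : ℝ) ≤ k := by positivity
    have hkT : |y| ≤ k * T := by nlinarith
    obtain ⟨hy1, hy2⟩ := abs_le.1 hkT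
    exact mem_range_of_exists_le_of_exists_ge hcont ⟨-k, by rw [hnat']; exact hy1⟩
      ⟨k, by rw [hnat]; exact hy2⟩
  set e := hmono.orderIsoOfSurjective tau hsurj with he
  have hright : ∀ y, tau (e.symm y) = y := fun y => e.apply_symm_apply y
  have hleft : ∀ y, e.symm (tau y) = y := fun y => e.symm_apply_apply y
  have hΘd : ∀ τ, HasDerivAt e.symm (pw r (e.symm τ)) τ := by
    intro τ
    have := HasDerivAt.of_local_left_inverse (f := tau) (g := e.symm) (a := τ)
      e.symm.continuous.continuousAt (hder _) (one_div_pos.2 (pw_pos r _)).ne'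
      (Filter.Eventually.of_forall hright)
    simpa using this
  have hΘT : ∀ τ, e.symm (τ + T) = e.symm τ + 1 := by
    intro τ
    apply hmono.injective
    rw [hright, hper, hright]
  refine ⟨e.symm, fun τ => pw r (e.symm τ), ?_, hΘT, ?_, hΘd, ?_, ?_⟩
  · have := hleft 0
    rwa [h0] at this
  · intro τ
    have := pw_per r (e.symm τ)
    simp only [one_div, inv_inj] at this
    simp only [hΘT, this]
  · intro τ
    have := (pw_hasDeriv r (e.symm τ)).comp τ (hΘd τ)
    refine HasDerivAt.congr_deriv this ?_
    rw [div_mul_cancel₀ _ (pw_pos r (e.symm τ)).ne']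
  · have hle1 : ∀ x : ℝ, 0 ≤ x → x ≤ 1 / 17 → 1 / pw r x ≤ 1 := by
      intro x hx hx2
      rw [div_le_one (pw_pos _ _)]
      unfold pw
      rw [Real.one_le_sqrt]
      have hpi := Real.pi_lt_d2
      have hpi0 := Real.pi_pos
      have : 0 ≤ Real.cos (2 * π * x) := Real.cos_nonneg_of_mem_Icc
        ⟨by have : 0 ≤ π * x := by positivity
            linarith, by nlinarith⟩
      have := Real.exp_pos r
      linarith
    have hA : tau (1 / 17) ≤ 1 / 17 := by
      have : tau (1 / 17) ≤ ∫ x in (0:ℝ)..(1/17), (1:ℝ) := by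
        apply intervalIntegral.integral_mono_on (by norm_num) ((pw_cont' r).intervalIntegrable _ _)
          (by simp)
        intro x hx
        exact hle1 x hx.1 hx.2
      simpa using this
    have hB : T - 1 / 17 ≤ tau (16 / 17) := by
      have h1 := hper (-(1 / 17))
      rw [show (-(1 / 17) + 1 : ℝ) = 16 / 17 by norm_num] at h1
      have h2 : tau (-(1 / 17)) = - tau (1 / 17) := by
        simp only [htau]
        have h3 : ∀ x, 1 / pw r (-x) = 1 / pw r x := by
          intro x; simp only [pw]; rw [mul_neg, Real.cos_neg]
        have h4 := intervalIntegral.integral_comp_neg (a := 0) (b := 1 / 17)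
          (fun x => 1 / pw r x)
        simp only [h3, neg_zero] at h4
        rw [h4, intervalIntegral.integral_symm]
      linarith
    intro τ h1 h2
    constructor
    · rw [← hleft (1 / 17)]
      exact e.symm.monotone (hA.trans h1)
    · rw [← hleft (16 / 17)]
      exact e.symm.monotone (h2.trans hB)

open scoped Manifold in
lemma global_ode {E : Type*} [NormedAddCommGroup E] [NormedSpace ℝ E] [CompleteSpace E]
    (f : E → E) (K : NNReal) (hK : LipschitzWith K f) (hf : ContDiff ℝ 1 f) (x : E) :
    ∃ c : ℝ → E, c 0 = x ∧ ∀ t, HasDerivAt c (f (c t)) t := by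
  have hKp : (0 : ℝ) < K + 1 := by positivity
  set ε : ℝ := 1 / (2 * (K + 1)) with hε
  have hεpos : 0 < ε := by positivity
  have key : ∀ x : E, ∃ γ : ℝ → E, γ 0 = x ∧
      IsMIntegralCurveOn (I := 𝓘(ℝ, E)) γ (fun y => (f y : TangentSpace 𝓘(ℝ, E) y)) (Set.Ioo (-ε) ε) := by
    intro x
    set a : NNReal := ‖f x‖₊ / (K + 1) with ha
    set L : NNReal := 2 * ‖f x‖₊ with hL
    have hpl : IsPicardLindelof (fun _ => f) (tmin := -ε) (tmax := ε)
        ⟨0, by constructor <;> linarith⟩ x a 0 L K := by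
      apply IsPicardLindelof.of_time_independent
      · intro y hy
        have h1 : ‖f y - f x‖ ≤ K * ‖y - x‖ := hK.norm_sub_le y x
        have h2 : ‖y - x‖ ≤ a := by simpa [dist_eq_norm] using hy
        have h3 : (a : ℝ) = ‖f x‖ / (K + 1) := by simp [ha]
        have h4 : (K : ℝ) * ‖y - x‖ ≤ ‖f x‖ := by
          calc (K : ℝ) * ‖y - x‖ ≤ K * (‖f x‖ / (K + 1)) := by rw [← h3]; gcongr
            _ ≤ (K + 1) * (‖f x‖ / (K + 1)) := by gcongr; linarith
            _ = ‖f x‖ := by field_simp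
        have h5 : ‖f y‖ ≤ ‖f y - f x‖ + ‖f x‖ := by
          simpa using norm_add_le (f y - f x) (f x)
        simp only [hL, NNReal.coe_mul, NNReal.coe_ofNat, coe_nnnorm]
        linarith
      · exact hK.lipschitzOnWith
      · simp only [sub_zero, sub_neg_eq_add, zero_add, max_self, NNReal.coe_zero]
        simp only [hL, ha, hε, NNReal.coe_mul, NNReal.coe_ofNat, coe_nnnorm, NNReal.coe_div,
          NNReal.coe_add, NNReal.coe_one]
        apply le_of_eq
        field_simp
    obtain ⟨γ, h0, hγ⟩ := hpl.exists_eq_forall_mem_Icc_hasDerivWithinAt₀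
    refine ⟨γ, h0, fun t ht => ?_⟩
    have := (hγ t (Set.Ioo_subset_Icc_self ht)).hasDerivAt (Icc_mem_nhds ht.1 ht.2)
    exact this.hasFDerivAt.hasMFDerivAt.hasMFDerivWithinAt
  obtain ⟨γ, h0, hγ⟩ := exists_isMIntegralCurve_of_isMIntegralCurveOn (I := 𝓘(ℝ, E))
    (v := fun y => (f y : TangentSpace 𝓘(ℝ, E) y))
    (contMDiff_vectorSpace_iff_contDiff.2 hf) hεpos key x
  refine ⟨γ, h0, fun t => ?_⟩
  have h1 : HasFDerivAt γ ((1 : ℝ →L[ℝ] ℝ).smulRight (f (γ t))) t :=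
    hasMFDerivAt_iff_hasFDerivAt.1 (hγ t)
  simpa using h1.hasDerivAt

/-- the vector field of the pendulum times rotators -/
def pvf (m : ℕ) (i0 : Fin m) (κ : ℝ) (x : (Fin m → ℝ) × (Fin m → ℝ)) :
    (Fin m → ℝ) × (Fin m → ℝ) :=
  (x.2, Pi.single i0 (-(κ * (2 * π * Real.sin (2 * π * x.1 i0)))))

lemma pvf_contDiff (m : ℕ) (i0 : Fin m) (κ : ℝ) : ContDiff ℝ 1 (pvf m i0 κ) := by
  unfold pvf
  refine ContDiff.prodMk contDiff_snd ?_
  rw [contDiff_pi]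
  intro i
  by_cases h : i = i0
  · subst h
    simp only [Pi.single_eq_same]
    fun_prop
  · simp only [Pi.single_eq_of_ne h]
    exact contDiff_const

lemma pvf_lipschitz (m : ℕ) (i0 : Fin m) (κ : ℝ) : ∃ K : NNReal, LipschitzWith K (pvf m i0 κ) := by
  set B : ℝ := 1 + |κ| * (2 * π * (2 * π)) with hB
  have hB0 : 0 ≤ B := by positivity
  refine ⟨⟨B, hB0⟩, LipschitzWith.of_dist_le_mul fun x y => ?_⟩
  change dist (pvf m i0 κ x) (pvf m i0 κ y) ≤ B * dist x y
  have hd : 0 ≤ dist x y := dist_nonneg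
  have hd1 : dist x.1 y.1 ≤ dist x y := le_max_left _ _
  have hd2 : dist x.2 y.2 ≤ dist x y := le_max_right _ _
  rw [Prod.dist_eq]
  apply max_le
  · change dist x.2 y.2 ≤ _
    have : 0 ≤ |κ| * (2 * π * (2 * π)) := by positivity
    nlinarith
  · rw [dist_pi_le_iff (by positivity)]
    intro i
    by_cases h : i = i0
    · subst h
      simp only [pvf, Pi.single_eq_same, Real.dist_eq]
      have h1 : |Real.sin (2 * π * x.1 i) - Real.sin (2 * π * y.1 i)|
          ≤ |2 * π * x.1 i - 2 * π * y.1 i| := by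
        simpa [Real.dist_eq] using Real.lipschitzWith_sin.dist_le_mul (2 * π * x.1 i) (2 * π * y.1 i)
      have h2 : |x.1 i - y.1 i| ≤ dist x y := by
        have := dist_le_pi_dist x.1 y.1 i
        rw [Real.dist_eq] at this
        linarith
      rw [← mul_sub, abs_mul, abs_of_pos Real.two_pi_pos] at h1
      rw [show -(κ * (2 * π * Real.sin (2 * π * x.1 i))) - -(κ * (2 * π * Real.sin (2 * π * y.1 i)))
        = -(κ * (2 * π) * (Real.sin (2 * π * x.1 i) - Real.sin (2 * π * y.1 i))) by ring,
        abs_neg, abs_mul, abs_mul, abs_of_pos Real.two_pi_pos]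
      calc |κ| * (2 * π) * |Real.sin (2 * π * x.1 i) - Real.sin (2 * π * y.1 i)|
          ≤ |κ| * (2 * π) * (2 * π * dist x y) := by
            gcongr
            exact h1.trans (by gcongr)
        _ ≤ B * dist x y := by rw [hB]; nlinarith
    · simp only [pvf, Pi.single_eq_of_ne h, dist_self]
      positivity

/-- the Hamiltonian -/
def pham (m : ℕ) (i0 : Fin m) (κ : ℝ) : Ann m → ℝ :=
  fun z => (1 / 2) * (∑ i, (z.2 i) ^ 2) + κ * (-cosC (z.1 i0))

lemma cosC_coe (x : ℝ) : cosC (x : T1) = Real.cos (2 * π * x) := by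
  unfold cosC rep
  rw [AddCircle.coe_equivIco_mk_apply]
  simp only [div_one, mul_one]
  rw [Int.fract, mul_sub]
  rw [show 2 * π * (⌊x⌋ : ℝ) = ⌊x⌋ * (2 * π) by ring, Real.cos_sub_int_mul_two_pi]

lemma rep_coe (θ : T1) : ((rep θ : ℝ) : T1) = θ := by
  unfold rep
  exact (AddCircle.equivIco (1:ℝ) 0).symm_apply_apply θ

lemma pham_fderiv (m : ℕ) (i0 : Fin m) (κ : ℝ) (x : (Fin m → ℝ) × (Fin m → ℝ)) (u w : Fin m → ℝ) :
    fderiv ℝ (pham m i0 κ ∘ projAnn m) x (u, w) =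
      ∑ i, x.2 i * w i + κ * (2 * π * Real.sin (2 * π * x.1 i0)) * u i0 := by
  have he : pham m i0 κ ∘ projAnn m = fun x =>
      (1 / 2) * (∑ i, (x.2 i) ^ 2) + κ * (-Real.cos (2 * π * x.1 i0)) := by
    funext x
    simp only [pham, projAnn, Function.comp, cosC_coe]
  rw [he]
  have hdiff : DifferentiableAt ℝ (fun x : (Fin m → ℝ) × (Fin m → ℝ) =>
      (1 / 2) * (∑ i, (x.2 i) ^ 2) + κ * (-Real.cos (2 * π * x.1 i0))) x := by fun_prop
  have h1 := hdiff.hasFDerivAt.hasLineDerivAt (u, w)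
  have h2 : HasLineDerivAt ℝ (fun x : (Fin m → ℝ) × (Fin m → ℝ) =>
      (1 / 2) * (∑ i, (x.2 i) ^ 2) + κ * (-Real.cos (2 * π * x.1 i0)))
      (∑ i, x.2 i * w i + κ * (2 * π * Real.sin (2 * π * x.1 i0)) * u i0) x (u, w) := by
    unfold HasLineDerivAt
    simp only [Prod.snd_add, Prod.fst_add, Prod.smul_snd, Prod.smul_fst, Pi.add_apply,
      Pi.smul_apply, smul_eq_mul]
    have hl : ∀ p q : ℝ, HasDerivAt (fun t : ℝ => p + t * q) q 0 := by
      intro p q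
      simpa using ((hasDerivAt_id (0:ℝ)).mul_const q).const_add p
    have hA : HasDerivAt (fun t : ℝ => ∑ i, (x.2 i + t * w i) ^ 2) (∑ i, 2 * (x.2 i * w i)) 0 := by
      apply HasDerivAt.fun_sum
      intro i _
      refine ((hl (x.2 i) (w i)).pow 2).congr_deriv ?_
      simp; ring
    have hB : HasDerivAt (fun t : ℝ => Real.cos (2 * π * (x.1 i0 + t * u i0)))
        (-Real.sin (2 * π * x.1 i0) * (2 * π * u i0)) 0 := by
      refine (((hl (x.1 i0) (u i0)).const_mul (2 * π)).cos).congr_deriv ?_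
      simp
    refine ((hA.const_mul (1 / 2)).add (hB.neg.const_mul κ)).congr_deriv ?_
    rw [← Finset.mul_sum]
    ring
  exact h1.unique h2

lemma sol_iff (m : ℕ) (i0 : Fin m) (κ : ℝ) (c : ℝ → (Fin m → ℝ) × (Fin m → ℝ)) :
    (∀ t : ℝ, ∀ i : Fin m,
        HasDerivAt (fun s => (c s).1 i)
          (fderiv ℝ (pham m i0 κ ∘ projAnn m) (c t) ((0 : Fin m → ℝ), Pi.single i 1)) t ∧
        HasDerivAt (fun s => (c s).2 i)
          (-(fderiv ℝ (pham m i0 κ ∘ projAnn m) (c t) (Pi.single i 1, (0 : Fin m → ℝ)))) t) ↔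
    ∀ t, HasDerivAt c (pvf m i0 κ (c t)) t := by
  refine forall_congr' fun t => ?_
  have e1 : ∀ i, fderiv ℝ (pham m i0 κ ∘ projAnn m) (c t) ((0 : Fin m → ℝ), Pi.single i 1)
      = (pvf m i0 κ (c t)).1 i := by
    intro i
    rw [pham_fderiv]
    simp [pvf, Pi.single_apply]
  have e2 : ∀ i, -fderiv ℝ (pham m i0 κ ∘ projAnn m) (c t) (Pi.single i 1, (0 : Fin m → ℝ))
      = (pvf m i0 κ (c t)).2 i := by
    intro i
    rw [pham_fderiv]
    by_cases h : i = i0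
    · subst h; simp [pvf]
    · simp [pvf, Pi.single_eq_of_ne h, Pi.single_eq_of_ne (Ne.symm h)]
  simp only [e1, e2]
  constructor
  · intro h
    have h1 : HasDerivAt (fun s => (c s).1) (pvf m i0 κ (c t)).1 t := hasDerivAt_pi.2 fun i => (h i).1
    have h2 : HasDerivAt (fun s => (c s).2) (pvf m i0 κ (c t)).2 t := hasDerivAt_pi.2 fun i => (h i).2
    exact h1.prodMk h2
  · intro h i
    have hf := h.hasFDerivAt.fst.hasDerivAt
    have hs := h.hasFDerivAt.snd.hasDerivAt
    refine ⟨(hasDerivAt_pi.1 hf i).congr_deriv (by simp), (hasDerivAt_pi.1 hs i).congr_deriv (by simp)⟩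

lemma coe_T1_eq {x y : ℝ} (h : (x : T1) = (y : T1)) : ∃ k : ℤ, x = y + k := by
  have h1 : ((x - y : ℝ) : T1) = 0 := by rw [AddCircle.coe_sub, h, sub_self]
  obtain ⟨k, hk⟩ := (AddCircle.coe_eq_zero_iff (1:ℝ)).1 h1
  refine ⟨k, ?_⟩
  simp at hk
  linarith

lemma sol_unique (m : ℕ) (i0 : Fin m) (κ : ℝ) (c d : ℝ → (Fin m → ℝ) × (Fin m → ℝ))
    (hc : ∀ t, HasDerivAt c (pvf m i0 κ (c t)) t) (hd : ∀ t, HasDerivAt d (pvf m i0 κ (d t)) t)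
    (h0 : projAnn m (c 0) = projAnn m (d 0)) : ∀ t, projAnn m (c t) = projAnn m (d t) := by
  obtain ⟨K, hK⟩ := pvf_lipschitz m i0 κ
  have h01 : ∀ i, ∃ k : ℤ, (c 0).1 i = (d 0).1 i + k := by
    intro i
    have := congrFun (congrArg Prod.fst h0) i
    exact coe_T1_eq this
  choose k hk using h01
  have h02 : (c 0).2 = (d 0).2 := by
    have := congrArg Prod.snd h0
    exact this
  set s : (Fin m → ℝ) × (Fin m → ℝ) := (fun i => (k i : ℝ), 0) with hs
  have hshift : ∀ x, pvf m i0 κ (x + s) = pvf m i0 κ x := by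
    intro x
    simp only [pvf, hs, Prod.snd_add, Prod.fst_add, Pi.add_apply, add_zero]
    rw [show 2 * π * (x.1 i0 + k i0) = 2 * π * x.1 i0 + k i0 * (2 * π) by ring,
      Real.sin_add_int_mul_two_pi]
  have hd' : ∀ t, HasDerivAt (fun t => d t + s) (pvf m i0 κ (d t + s)) t := by
    intro t
    rw [hshift]
    exact (hd t).add_const s
  have : c = fun t => d t + s := by
    apply ODE_solution_unique_univ (v := fun _ => pvf m i0 κ) (s := fun _ => Set.univ) (t₀ := 0)
      (K := K)
    · intro t; exact hK.lipschitzOnWith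
    · intro t; exact ⟨hc t, Set.mem_univ _⟩
    · intro t; exact ⟨hd' t, Set.mem_univ _⟩
    · refine Prod.ext ?_ ?_
      · funext i; simp [hs, hk]
      · simp [hs, h02]
  intro t
  rw [this]
  refine Prod.ext ?_ ?_
  · funext i
    simp [projAnn, hs]
  · simp [projAnn, hs]

lemma pflow_exists (m : ℕ) (i0 : Fin m) (κ : ℝ) :
    ∃ Φ : ℝ → Ann m → Ann m, IsHamFlow m (pham m i0 κ) Φ := by
  obtain ⟨K, hK⟩ := pvf_lipschitz m i0 κ
  choose c hc0 hc using global_ode (pvf m i0 κ) K hK (pvf_contDiff m i0 κ)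
  set lift : Ann m → (Fin m → ℝ) × (Fin m → ℝ) := fun x => (fun i => rep (x.1 i), x.2) with hl
  have hlift : ∀ x, projAnn m (lift x) = x := by
    intro x
    refine Prod.ext ?_ rfl
    funext i
    exact rep_coe _
  refine ⟨fun t x => projAnn m (c (lift x) t), ?_, ?_, ?_⟩
  · intro x
    simp only [hc0, hlift]
  · intro s t x
    have := sol_unique m i0 κ (fun s => c (lift x) (s + t)) (c (lift (projAnn m (c (lift x) t))))
      (fun s => by simpa using (hc (lift x) (s + t)).comp_add_const s t) (hc _)
      (by simp only [hc0, hlift, zero_add])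
    exact this s
  · intro x
    exact ⟨c (lift x), fun t => rfl, (sol_iff m i0 κ _).2 (hc _)⟩

lemma pflow_orbit (m : ℕ) (i0 : Fin m) (κ : ℝ) (Φ : ℝ → Ann m → Ann m)
    (hΦ : IsHamFlow m (pham m i0 κ) Φ) (d : ℝ → (Fin m → ℝ) × (Fin m → ℝ))
    (hd : ∀ t, HasDerivAt d (pvf m i0 κ (d t)) t) (k : ℕ) :
    (Φ 1)^[k] (projAnn m (d 0)) = projAnn m (d k) := by
  obtain ⟨h0, hadd, hex⟩ := hΦ
  have hit : ∀ k : ℕ, ∀ x, (Φ 1)^[k] x = Φ k x := by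
    intro k
    induction k with
    | zero => intro x; simp [h0]
    | succ k ih =>
      intro x
      rw [Function.iterate_succ_apply', ih, ← hadd]
      push_cast
      rw [add_comm]
  obtain ⟨c, hc1, hc2⟩ := hex (projAnn m (d 0))
  rw [hit, ← hc1]
  exact sol_unique m i0 κ c d ((sol_iff m i0 κ c).1 hc2) hd (by rw [hc1, h0]) k

/-- Fejer kernel normalised to have value one at zero -/
def fej (D : ℕ) (θ : ℝ) : ℝ :=
  ∑ j ∈ Finset.range D, ∑ l ∈ Finset.range D,
    (1 / (D : ℝ) ^ 2) * Real.cos ((2 * π * ((j : ℝ) - l)) * θ)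

lemma fej_sq (D : ℕ) (θ : ℝ) : fej D θ = (1 / (D : ℝ) ^ 2) *
    ((∑ j ∈ Finset.range D, Real.cos (2 * π * j * θ)) ^ 2 +
      (∑ j ∈ Finset.range D, Real.sin (2 * π * j * θ)) ^ 2) := by
  unfold fej
  rw [pow_two (∑ j ∈ Finset.range D, Real.cos (2 * π * j * θ)),
    pow_two (∑ j ∈ Finset.range D, Real.sin (2 * π * j * θ)), Finset.sum_mul_sum,
    Finset.sum_mul_sum, ← Finset.sum_add_distrib, Finset.mul_sum]
  refine Finset.sum_congr rfl fun j _ => ?_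
  rw [← Finset.sum_add_distrib, Finset.mul_sum]
  refine Finset.sum_congr rfl fun l _ => ?_
  rw [show 2 * π * ((j : ℝ) - l) * θ = 2 * π * j * θ - 2 * π * l * θ by ring, Real.cos_sub]

lemma fej_nonneg (D : ℕ) (θ : ℝ) : 0 ≤ fej D θ := by
  rw [fej_sq]; positivity

lemma fej_contDiff (D : ℕ) (n : WithTop ℕ∞) : ContDiff ℝ n (fej D) := by
  unfold fej
  fun_prop

lemma fej_deriv_bound (D : ℕ) (hD : 0 < D) (k : ℕ) (θ : ℝ) :
    |iteratedDeriv k (fej D) θ| ≤ (2 * π * D) ^ k := by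
  have hD' : (0 : ℝ) < D := by exact_mod_cast hD
  have hterm : ∀ j l : ℕ, iteratedDeriv k (fun θ : ℝ => (1 / (D : ℝ) ^ 2) *
      Real.cos ((2 * π * ((j : ℝ) - l)) * θ)) θ = (1 / (D : ℝ) ^ 2) *
      ((2 * π * ((j : ℝ) - l)) ^ k * iteratedDeriv k Real.cos ((2 * π * ((j : ℝ) - l)) * θ)) := by
    intro j l
    rw [iteratedDeriv_const_mul_field, iteratedDeriv_comp_const_mul Real.contDiff_cos]
  have h1 : iteratedDeriv k (fej D) θ = ∑ j ∈ Finset.range D, ∑ l ∈ Finset.range D,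
      (1 / (D : ℝ) ^ 2) * ((2 * π * ((j : ℝ) - l)) ^ k *
        iteratedDeriv k Real.cos ((2 * π * ((j : ℝ) - l)) * θ)) := by
    unfold fej
    rw [iteratedDeriv_fun_sum (fun i _ => ContDiff.contDiffAt (by fun_prop))]
    refine Finset.sum_congr rfl fun j _ => ?_
    rw [iteratedDeriv_fun_sum (fun i _ => ContDiff.contDiffAt (by fun_prop))]
    refine Finset.sum_congr rfl fun l _ => ?_
    exact hterm j l
  rw [h1]
  calc _ ≤ ∑ j ∈ Finset.range D, ∑ l ∈ Finset.range D, (1 / (D : ℝ) ^ 2) * (2 * π * D) ^ k := by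
        refine (Finset.abs_sum_le_sum_abs _ _).trans (Finset.sum_le_sum fun j hj => ?_)
        refine (Finset.abs_sum_le_sum_abs _ _).trans (Finset.sum_le_sum fun l hl => ?_)
        rw [abs_mul, abs_mul, abs_of_pos (by positivity : 0 < 1 / (D : ℝ) ^ 2), abs_pow]
        have hc := Real.abs_iteratedDeriv_cos_le_one k ((2 * π * ((j : ℝ) - l)) * θ)
        have hjD : (j : ℝ) < D := by exact_mod_cast Finset.mem_range.1 hj
        have hlD : (l : ℝ) < D := by exact_mod_cast Finset.mem_range.1 hl
        have hj0 : (0 : ℝ) ≤ j := by positivity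
        have hl0 : (0 : ℝ) ≤ l := by positivity
        have hab : |2 * π * ((j : ℝ) - l)| ≤ 2 * π * D := by
          rw [abs_mul, abs_of_pos Real.two_pi_pos]
          gcongr
          rw [abs_le]; constructor <;> linarith
        calc _ ≤ 1 / (D : ℝ) ^ 2 * ((2 * π * D) ^ k * 1) := by gcongr
          _ = _ := by ring
    _ = (2 * π * D) ^ k := by
        simp only [Finset.sum_const, Finset.card_range, nsmul_eq_mul]
        field_simp

lemma fej_le_one (D : ℕ) (hD : 0 < D) (θ : ℝ) : fej D θ ≤ 1 := by
  have := fej_deriv_bound D hD 0 θ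
  simp only [iteratedDeriv_zero, pow_zero] at this
  exact (le_abs_self _).trans this

lemma fej_zero (D : ℕ) (hD : 0 < D) : fej D 0 = 1 := by
  have hD' : (0 : ℝ) < D := by exact_mod_cast hD
  simp [fej]
  field_simp

lemma fej_add_int (D : ℕ) (θ : ℝ) (z : ℤ) : fej D (θ + z) = fej D θ := by
  unfold fej
  refine Finset.sum_congr rfl fun j _ => Finset.sum_congr rfl fun l _ => ?_
  congr 1
  rw [show 2 * π * ((j : ℝ) - l) * (θ + z) = 2 * π * ((j : ℝ) - l) * θ +
    (((j : ℤ) - l) * z : ℤ) * (2 * π) by push_cast; ring, Real.cos_add_int_mul_two_pi]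

lemma fej_root (D : ℕ) (hD : 0 < D) (r : ℕ) (hr : ¬ D ∣ r) : fej D ((r : ℝ) / D) = 0 := by
  have hD' : (D : ℂ) ≠ 0 := by exact_mod_cast hD.ne'
  set ζ : ℂ := Complex.exp (2 * π * Complex.I * (r / D)) with hζ
  have hpow : ∀ j : ℕ, ζ ^ j = Complex.exp (((2 * π * j * ((r : ℝ) / D) : ℝ) : ℂ) * Complex.I) := by
    intro j
    rw [hζ, ← Complex.exp_nat_mul]
    congr 1
    push_cast
    ring
  have hζD : ζ ^ D = 1 := by
    rw [hζ, ← Complex.exp_nat_mul, Complex.exp_eq_one_iff]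
    refine ⟨r, ?_⟩
    push_cast
    field_simp
  have hζ1 : ζ ≠ 1 := by
    rw [hζ, Ne, Complex.exp_eq_one_iff]
    rintro ⟨n, hn⟩
    have h2 : (2 * π * Complex.I : ℂ) ≠ 0 := Complex.two_pi_I_ne_zero
    have h3 : ((r : ℂ) / D) = n := by
      apply mul_left_cancel₀ h2
      rw [hn]; ring
    rw [div_eq_iff hD'] at h3
    have h4 : (r : ℤ) = n * D := by exact_mod_cast h3
    apply hr
    have : (D : ℤ) ∣ (r : ℤ) := ⟨n, by rw [h4]; ring⟩
    exact_mod_cast this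
  have hsum : ∑ j ∈ Finset.range D, ζ ^ j = 0 := by
    rw [geom_sum_eq hζ1, hζD]; simp
  have hre := congrArg Complex.re hsum
  have him := congrArg Complex.im hsum
  simp only [hpow, Complex.re_sum, Complex.im_sum, Complex.exp_ofReal_mul_I_re,
    Complex.exp_ofReal_mul_I_im, Complex.zero_re, Complex.zero_im] at hre him
  rw [fej_sq, hre, him]
  simp

lemma fej_sum (α L Y : ℝ) (hα : 1 < α) (hL : 0 < L) (hY : 0 ≤ Y) :
    Summable (fun k : ℕ => (L ^ α) ^ k / ((k.factorial : ℝ)) ^ α * Y ^ k) ∧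
    ∑' k : ℕ, (L ^ α) ^ k / ((k.factorial : ℝ)) ^ α * Y ^ k ≤
      Real.exp (α * (L * Y ^ (1 / α))) := by
  have hα0 : α ≠ 0 := by linarith
  set x : ℝ := L * Y ^ (1 / α) with hx
  have hx0 : 0 ≤ x := by positivity
  have hxα : x ^ α = L ^ α * Y := by
    rw [hx, Real.mul_rpow hL.le (by positivity), ← Real.rpow_mul hY, one_div_mul_cancel hα0,
      Real.rpow_one]
  have hterm : ∀ k : ℕ, (L ^ α) ^ k / ((k.factorial : ℝ)) ^ α * Y ^ k = (x ^ k / k.factorial) ^ α := by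
    intro k
    rw [Real.div_rpow (by positivity) (by positivity), ← Real.rpow_natCast x k, ← Real.rpow_mul hx0,
      mul_comm (k : ℝ) α, Real.rpow_mul hx0, hxα, Real.rpow_natCast, mul_pow]
    ring
  have hle : ∀ k : ℕ, (x ^ k / k.factorial) ^ α ≤ (x ^ k / k.factorial) * Real.exp x ^ (α - 1) := by
    intro k
    have h0 : 0 ≤ x ^ k / k.factorial := by positivity
    have h1 := Real.pow_div_factorial_le_exp x hx0 k
    calc (x ^ k / k.factorial) ^ α = (x ^ k / k.factorial) ^ (1 + (α - 1)) := by congr 1; ring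
      _ = (x ^ k / k.factorial) * (x ^ k / k.factorial) ^ (α - 1) := by
          rw [Real.rpow_add_of_nonneg h0 (by norm_num) (by linarith), Real.rpow_one]
      _ ≤ _ := by
          gcongr
  have hs := (Real.summable_pow_div_factorial x).mul_right (Real.exp x ^ (α - 1))
  have hsum : Summable (fun k : ℕ => (x ^ k / k.factorial) ^ α) :=
    Summable.of_nonneg_of_le (fun k => by positivity) hle hs
  simp only [hterm]
  refine ⟨hsum, (hsum.tsum_le_tsum hle hs).trans ?_⟩
  rw [tsum_mul_right]
  have he : ∑' k : ℕ, x ^ k / k.factorial = Real.exp x := by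
    rw [Real.exp_eq_exp_ℝ, NormedSpace.exp_eq_tsum_div]
  rw [he, ← Real.exp_mul, ← Real.exp_add]
  apply le_of_eq
  congr 1
  ring

lemma bump_sum (α L R β c : ℝ) (hL : 0 < L) (hR : 0 < R) (hβ : β < α) :
    Summable (fun k : ℕ => (L ^ α) ^ k / ((k.factorial : ℝ)) ^ α *
      (c * (R ^ k * (k.factorial : ℝ) ^ β))) := by
  set γ := α - β with hγ
  have hγ0 : 0 < γ := by linarith
  set X := L ^ α * R with hX
  have hX0 : 0 < X := by positivity
  set Y := X ^ (1 / γ) with hY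
  have hY0 : 0 < Y := by positivity
  have hYX : Y ^ γ = X := by
    rw [hY, ← Real.rpow_mul hX0.le, one_div_mul_cancel hγ0.ne', Real.rpow_one]
  have hterm : ∀ k : ℕ, (L ^ α) ^ k / ((k.factorial : ℝ)) ^ α *
      (c * (R ^ k * (k.factorial : ℝ) ^ β)) =
      c * ((((2 * Y) ^ k / k.factorial) ^ γ) * (((1 / 2 : ℝ) ^ γ) ^ k)) := by
    intro k
    have hf : (0 : ℝ) < k.factorial := by positivity
    have h1 : (k.factorial : ℝ) ^ α = (k.factorial : ℝ) ^ β * (k.factorial : ℝ) ^ γ := by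
      rw [← Real.rpow_add hf]; congr 1; ring
    have h2 : ((2 * Y) ^ k) ^ γ * ((1 / 2 : ℝ) ^ γ) ^ k = X ^ k := by
      rw [← Real.rpow_natCast ((1 / 2 : ℝ) ^ γ), ← Real.rpow_natCast (2 * Y),
        ← Real.rpow_mul (by positivity), mul_comm (k : ℝ) γ, Real.rpow_mul (by positivity),
        ← Real.mul_rpow (by positivity) (by positivity),
        ← Real.mul_rpow (by positivity) (by positivity)]
      rw [show 2 * Y * (1 / 2) = Y by ring, hYX, Real.rpow_natCast]
    have h3 : ((2 * Y) ^ k) ^ γ / (k.factorial : ℝ) ^ γ * ((1 / 2 : ℝ) ^ γ) ^ k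
        = X ^ k / (k.factorial : ℝ) ^ γ := by
      rw [← h2]; ring
    rw [Real.div_rpow (by positivity) hf.le, h1, h3, hX, mul_pow]
    have h4 : (k.factorial : ℝ) ^ β ≠ 0 := (Real.rpow_pos_of_pos hf β).ne'
    have h5 : (k.factorial : ℝ) ^ γ ≠ 0 := (Real.rpow_pos_of_pos hf γ).ne'
    generalize (k.factorial : ℝ) ^ β = A at *
    generalize (k.factorial : ℝ) ^ γ = B at *
    field_simp
  simp only [hterm]
  apply Summable.mul_left
  have hg : Summable (fun k : ℕ => Real.exp (2 * Y) ^ γ * ((1 / 2 : ℝ) ^ γ) ^ k) := by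
    apply Summable.mul_left
    apply summable_geometric_of_lt_one (by positivity)
    exact Real.rpow_lt_one (by norm_num) (by norm_num) hγ0
  refine Summable.of_nonneg_of_le (fun k => by positivity) (fun k => ?_) hg
  gcongr
  exact Real.pow_div_factorial_le_exp _ (by positivity) k

lemma real_iteratedDeriv_eq (f : ℝ → ℝ) (F : ℂ → ℂ) (hf : ContDiff ℝ (⊤ : ℕ∞) f)
    (S : Set ℝ) (hS : IsOpen S) (hF : ∀ x ∈ S, AnalyticAt ℂ F (x : ℂ))
    (hfF : ∀ x ∈ S, ((f x : ℝ) : ℂ) = F x) (k : ℕ) :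
    ∀ x ∈ S, ((iteratedDeriv k f x : ℝ) : ℂ) = iteratedDeriv k F x := by
  induction k with
  | zero => simpa using hfF
  | succ k ih =>
    intro x hx
    have hA : AnalyticAt ℂ (iteratedDeriv k F) (x : ℂ) := by
      rw [iteratedDeriv_eq_iterate]
      exact (hF x hx).iterated_deriv k
    have h1 : HasDerivAt (fun y : ℝ => iteratedDeriv k F (y : ℂ)) (deriv (iteratedDeriv k F) x) x :=
      hA.differentiableAt.hasDerivAt.comp_ofReal
    have hd : Differentiable ℝ (iteratedDeriv k f) :=
      hf.differentiable_iteratedDeriv k (by exact_mod_cast ENat.natCast_lt_top k)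
    have h2 : HasDerivAt (fun y : ℝ => ((iteratedDeriv k f y : ℝ) : ℂ))
        ((deriv (iteratedDeriv k f) x : ℝ) : ℂ) x := (hd x).hasDerivAt.ofReal_comp
    have h3 : (fun y : ℝ => ((iteratedDeriv k f y : ℝ) : ℂ)) =ᶠ[nhds x]
        (fun y : ℝ => iteratedDeriv k F (y : ℂ)) := by
      filter_upwards [hS.mem_nhds hx] with y hy using ih y hy
    rw [iteratedDeriv_succ, iteratedDeriv_succ]
    exact h2.unique (h1.congr_of_eventuallyEq h3)

lemma exists_delta_re (s : ℕ) : ∃ δ : ℝ, 0 < δ ∧ δ < 1 ∧ ∀ ζ : ℂ, ‖ζ‖ ≤ δ →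
    1 / 2 ≤ (((1 + ζ) ^ s)⁻¹).re := by
  have hc : ContinuousAt (fun ζ : ℂ => (((1 + ζ) ^ s)⁻¹).re) 0 := by
    apply Complex.continuous_re.continuousAt.comp
    apply ContinuousAt.inv₀
    · fun_prop
    · simp
  have h := hc.eventually_mem (Ioi_mem_nhds (a := (1 / 2 : ℝ)) (by norm_num))
  obtain ⟨ε, hε, h⟩ := Metric.eventually_nhds_iff.1 h
  refine ⟨min (ε / 2) (1 / 2), by positivity, by
    have := min_le_right (ε / 2) (1 / 2 : ℝ); linarith, fun ζ hζ => ?_⟩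
  have h1 : dist ζ 0 < ε := by
    rw [dist_zero_right]
    have := min_le_left (ε / 2) (1 / 2 : ℝ); linarith
  have := h h1
  simp only [Set.mem_Ioi] at this
  exact this.le

lemma cos_sub_bound (a : ℝ) (w : ℂ) (hw : ‖w‖ ≤ 1) :
    ‖Complex.cos (a + w) - Complex.cos a‖ ≤ 2 * ‖w‖ := by
  have h1 : Complex.cos (a + w) - Complex.cos a =
      (Complex.exp (a * Complex.I) * (Complex.exp (w * Complex.I) - 1) +
        Complex.exp (((-a : ℝ) : ℂ) * Complex.I) * (Complex.exp (-(w * Complex.I)) - 1)) / 2 := by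
    simp only [Complex.cos]
    rw [show (a + w) * Complex.I = a * Complex.I + w * Complex.I by ring,
      show -(a + w) * Complex.I = -a * Complex.I + -(w * Complex.I) by ring,
      Complex.exp_add, Complex.exp_add]
    push_cast
    ring
  have h2 : ‖Complex.exp (w * Complex.I) - 1‖ ≤ 2 * ‖w‖ := by
    have := Complex.norm_exp_sub_one_le (x := w * Complex.I) (by simpa using hw)
    simpa using this
  have h3 : ‖Complex.exp (-(w * Complex.I)) - 1‖ ≤ 2 * ‖w‖ := by
    have := Complex.norm_exp_sub_one_le (x := -(w * Complex.I)) (by simpa using hw)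
    simpa using this
  rw [h1, norm_div]
  have h4 := norm_add_le (Complex.exp (a * Complex.I) * (Complex.exp (w * Complex.I) - 1))
    (Complex.exp (((-a : ℝ) : ℂ) * Complex.I) * (Complex.exp (-(w * Complex.I)) - 1))
  rw [norm_mul, norm_mul, Complex.norm_exp_ofReal_mul_I, Complex.norm_exp_ofReal_mul_I] at h4
  simp only [Complex.norm_ofNat]
  linarith

lemma pow_exp_bound (s : ℕ) (hs : 1 ≤ s) (u : ℝ) (hu : 0 < u) (k : ℕ) :
    (u ^ k)⁻¹ * Real.exp (-((u ^ s)⁻¹ / 2)) ≤ (k.factorial : ℝ) ^ (1 / (s : ℝ)) * 2 ^ k := by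
  have hs0 : s ≠ 0 := by omega
  have hsr : (1 : ℝ) ≤ s := by exact_mod_cast hs
  rw [← pow_le_pow_iff_left₀ (by positivity) (by positivity) hs0]
  have hf : (0 : ℝ) < k.factorial := by positivity
  set t := (u ^ s)⁻¹ with ht
  have ht0 : 0 < t := by positivity
  have e1 : ((u ^ k)⁻¹ * Real.exp (-(t / 2))) ^ s = t ^ k * Real.exp (-(s * t / 2)) := by
    rw [mul_pow, ← Real.exp_nat_mul, ht, inv_pow, inv_pow, ← pow_mul, ← pow_mul, mul_comm k s]
    congr 2; ring
  have e2 : ((k.factorial : ℝ) ^ (1 / (s : ℝ)) * 2 ^ k) ^ s = k.factorial * (2 ^ k) ^ s := by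
    rw [mul_pow, ← Real.rpow_natCast, ← Real.rpow_mul hf.le, one_div_mul_cancel (by positivity),
      Real.rpow_one]
  rw [e1, e2]
  have h := Real.pow_div_factorial_le_exp (s * t / 2) (by positivity) k
  rw [div_le_iff₀ hf] at h
  have h5 : t ^ k ≤ 2 ^ k * (s * t / 2) ^ k := by
    rw [← mul_pow]
    apply pow_le_pow_left₀ ht0.le
    nlinarith
  have h6 : (2 : ℝ) ^ k ≤ (2 ^ k) ^ s := le_self_pow₀ (one_le_pow₀ (by norm_num)) hs0
  calc t ^ k * Real.exp (-(s * t / 2))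
      ≤ (2 ^ k * (Real.exp (s * t / 2) * k.factorial)) * Real.exp (-(s * t / 2)) := by
        gcongr
        exact h5.trans (by gcongr)
    _ = k.factorial * 2 ^ k * (Real.exp (s * t / 2) * Real.exp (-(s * t / 2))) := by ring
    _ = k.factorial * 2 ^ k := by rw [← Real.exp_add]; simp
    _ ≤ _ := by gcongr

def kap : ℝ := Real.cos (2 * π / 17)

lemma kap_lt : kap < 1 := by
  unfold kap
  rw [← Real.cos_zero]
  apply Real.cos_lt_cos_of_nonneg_of_le_pi (le_refl _) _ (by positivity)
  have := Real.pi_pos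
  linarith

lemma bump_core (s : ℕ) (hs : 1 ≤ s) : ∃ ρ : ℝ, 0 < ρ ∧ ∀ x : ℝ,
    0 < Real.cos (2 * π * x) - kap → ∀ k : ℕ,
    |iteratedDeriv k (fun x : ℝ => expNegInvGlue ((Real.cos (2 * π * x) - kap) ^ s)) x| ≤
      (2 / ρ) ^ k * (k.factorial : ℝ) ^ (1 + 1 / (s : ℝ)) := by
  obtain ⟨δ, hδ, hδ1, hre⟩ := exists_delta_re s
  have hπ := Real.pi_pos
  refine ⟨δ / (8 * π), by positivity, fun x hx k => ?_⟩
  set ρ := δ / (8 * π) with hρ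
  have hρ0 : 0 < ρ := by positivity
  set u : ℝ → ℝ := fun x => Real.cos (2 * π * x) - kap with hu
  set U : ℂ → ℂ := fun z => Complex.cos (2 * π * z) - kap with hU
  set G : ℂ → ℂ := fun z => Complex.exp (-((U z) ^ s)⁻¹) with hG
  have hUd : Differentiable ℂ U := by
    intro z; simp only [hU]; fun_prop
  have hUan : ∀ z, AnalyticAt ℂ U z := fun z => hUd.analyticAt z
  have hGan : ∀ z, U z ≠ 0 → AnalyticAt ℂ G z := by
    intro z hz
    exact ((((hUan z).pow s).inv (pow_ne_zero s hz)).neg).cexp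
  have hUu : ∀ y : ℝ, U y = ((u y : ℝ) : ℂ) := by
    intro y; simp [hU, hu]
  have hB : ContDiff ℝ (⊤ : ℕ∞) (fun x : ℝ => expNegInvGlue ((u x) ^ s)) := by
    apply expNegInvGlue.contDiff.comp
    apply ContDiff.pow
    apply ContDiff.sub _ contDiff_const
    exact Real.contDiff_cos.comp (contDiff_const.mul contDiff_id)
  have hSo : IsOpen {y : ℝ | 0 < u y} := by
    apply isOpen_lt continuous_const
    simp only [hu]; fun_prop
  have key := real_iteratedDeriv_eq _ G hB {y : ℝ | 0 < u y} hSo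
    (fun y hy => hGan y (by
      rw [hUu]
      simp only [Set.mem_ofPred_eq] at hy
      exact_mod_cast hy.ne'))
    (fun y hy => by
      simp only [Set.mem_ofPred_eq] at hy
      have : ¬ (u y ^ s ≤ 0) := not_le.2 (by positivity)
      simp only [expNegInvGlue, if_neg this, hG, hUu]
      push_cast
      rfl) k x hx
  have hux : 0 < u x := hx
  have hu2 : u x ≤ 2 := by
    have h1 := Real.cos_le_one (2 * π * x)
    have h2 := Real.neg_one_le_cos (2 * π / 17)
    simp only [hu, kap]; linarith
  -- bound on the ball
  have hball : ∀ z : ℂ, ‖z - x‖ ≤ ρ * u x → ‖U z - u x‖ ≤ δ * u x := by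
    intro z hz
    have hw : ‖2 * (π : ℂ) * (z - x)‖ = 2 * π * ‖z - x‖ := by
      rw [norm_mul, norm_mul, Complex.norm_real, Real.norm_of_nonneg hπ.le]; simp
    have h0 : 2 * π * ‖z - x‖ ≤ δ / 4 * u x := by
      calc 2 * π * ‖z - x‖ ≤ 2 * π * (ρ * u x) := by gcongr
        _ = δ / 4 * u x := by rw [hρ]; field_simp; ring
    have h1 := cos_sub_bound (2 * π * x) (2 * (π : ℂ) * (z - x)) (by
      rw [hw]; nlinarith)
    rw [hw] at h1
    have h2 : U z - u x = Complex.cos (((2 * π * x : ℝ) : ℂ) + 2 * (π : ℂ) * (z - x)) -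
        Complex.cos ((2 * π * x : ℝ) : ℂ) := by
      rw [← hUu]
      simp only [hU]
      push_cast
      rw [show 2 * (π : ℂ) * x + 2 * π * (z - x) = 2 * π * z by ring]
      ring
    rw [h2]
    nlinarith
  have hfac : ∀ z : ℂ, ‖z - x‖ ≤ ρ * u x → ∃ ζ : ℂ, ‖ζ‖ ≤ δ ∧ U z = u x * (1 + ζ) := by
    intro z hz
    have hux' : (u x : ℂ) ≠ 0 := by exact_mod_cast hux.ne'
    refine ⟨(U z - u x) / u x, ?_, by field_simp; ring⟩
    rw [norm_div, Complex.norm_real, Real.norm_of_nonneg hux.le, div_le_iff₀ hux]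
    exact hball z hz
  have hGb : ∀ z : ℂ, ‖z - x‖ ≤ ρ * u x → ‖G z‖ ≤ Real.exp (-((u x ^ s)⁻¹ / 2)) := by
    intro z hz
    obtain ⟨ζ, hζ, hUz⟩ := hfac z hz
    simp only [hG]
    rw [Complex.norm_exp, hUz, mul_pow, mul_inv]
    apply Real.exp_le_exp.2
    rw [show ((u x : ℂ) ^ s)⁻¹ = (((u x ^ s)⁻¹ : ℝ) : ℂ) by push_cast; rfl, Complex.neg_re,
      Complex.re_ofReal_mul]
    have := hre ζ hζ
    have ht : 0 < (u x ^ s)⁻¹ := by positivity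
    nlinarith
  have hGn : ∀ z : ℂ, ‖z - x‖ ≤ ρ * u x → U z ≠ 0 := by
    intro z hz h0
    have := hball z hz
    rw [h0, zero_sub, norm_neg, Complex.norm_real, Real.norm_of_nonneg hux.le] at this
    nlinarith
  have hr : 0 < ρ * u x := by positivity
  have hdc : DiffContOnCl ℂ G (Metric.ball (x : ℂ) (ρ * u x)) := by
    apply DifferentiableOn.diffContOnCl
    rw [closure_ball _ hr.ne']
    intro z hz
    rw [mem_closedBall_iff_norm] at hz
    exact (hGan z (hGn z hz)).differentiableAt.differentiableWithinAt
  have hC := Complex.norm_iteratedDeriv_le_of_forall_mem_sphere_norm_le k hr hdc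
    (C := Real.exp (-((u x ^ s)⁻¹ / 2))) (fun z hz => hGb z (by
      rw [mem_sphere_iff_norm] at hz; exact hz.le))
  rw [← key, Complex.norm_real, Real.norm_eq_abs] at hC
  refine hC.trans ?_
  have h7 := pow_exp_bound s hs (u x) hux k
  have hf : (0 : ℝ) < k.factorial := by positivity
  rw [Real.rpow_add hf, Real.rpow_one]
  calc (k.factorial : ℝ) * Real.exp (-((u x ^ s)⁻¹ / 2)) / (ρ * u x) ^ k
      = k.factorial * (ρ ^ k)⁻¹ * ((u x ^ k)⁻¹ * Real.exp (-((u x ^ s)⁻¹ / 2))) := by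
        rw [mul_pow, div_eq_mul_inv, mul_inv]; ring
    _ ≤ k.factorial * (ρ ^ k)⁻¹ * ((k.factorial : ℝ) ^ (1 / (s : ℝ)) * 2 ^ k) := by gcongr
    _ = _ := by
        clear_value ρ
        rw [div_pow, div_eq_mul_inv]; ring

lemma bump_exists (α : ℝ) (hα : 1 < α) : ∃ b : ℝ → ℝ, ContDiff ℝ (⊤ : ℕ∞) b ∧
    (∀ x, ∀ z : ℤ, b (x + z) = b x) ∧ (∀ x, 0 ≤ b x) ∧ (∀ x, b x ≤ 1) ∧ b 0 = 1 ∧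
    (∀ x, 1 / 17 ≤ x → x ≤ 16 / 17 → b x = 0) ∧
    ∃ c R β : ℝ, 0 < c ∧ 0 < R ∧ β < α ∧ ∀ k x, |iteratedDeriv k b x| ≤
      c * (R ^ k * (k.factorial : ℝ) ^ β) := by
  obtain ⟨r, hr⟩ := exists_nat_gt (1 / (α - 1))
  set s := 2 * r + 1 with hs
  have hs1 : 1 ≤ s := by omega
  have hodd : Odd s := ⟨r, hs⟩
  have hβ : 1 + 1 / (s : ℝ) < α := by
    have h0 : 0 < α - 1 := by linarith
    have h1 : (r : ℝ) ≤ s := by exact_mod_cast (by omega : r ≤ s)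
    have h2 : 1 / (α - 1) < s := by linarith
    have h3 : 1 / (s : ℝ) < α - 1 := by
      rw [one_div_lt (by positivity) h0]; exact h2
    linarith
  obtain ⟨ρ, hρ, hcore⟩ := bump_core s hs1
  set u : ℝ → ℝ := fun x => Real.cos (2 * π * x) - kap with hu
  set B : ℝ → ℝ := fun x : ℝ => expNegInvGlue ((u x) ^ s) with hBdef
  have hB : ContDiff ℝ (⊤ : ℕ∞) B := by
    apply expNegInvGlue.contDiff.comp
    apply ContDiff.pow
    apply ContDiff.sub _ contDiff_const
    exact Real.contDiff_cos.comp (contDiff_const.mul contDiff_id)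
  have hB0 : ∀ y, u y ≤ 0 → B y = 0 := by
    intro y hy
    exact expNegInvGlue.zero_of_nonpos (hodd.pow_nonpos hy)
  have hbd : ∀ k x, |iteratedDeriv k B x| ≤ (2 / ρ) ^ k * (k.factorial : ℝ) ^ (1 + 1 / (s : ℝ)) := by
    intro k
    have hcont : Continuous (iteratedDeriv k B) := hB.continuous_iteratedDeriv k
      (by exact_mod_cast le_top)
    have hcl : IsClosed {x | |iteratedDeriv k B x| ≤
        (2 / ρ) ^ k * (k.factorial : ℝ) ^ (1 + 1 / (s : ℝ))} :=
      isClosed_le hcont.abs continuous_const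
    have hsub : closure {x | 0 < u x} ⊆ {x | |iteratedDeriv k B x| ≤
        (2 / ρ) ^ k * (k.factorial : ℝ) ^ (1 + 1 / (s : ℝ))} :=
      closure_minimal (fun x hx => hcore x hx k) hcl
    intro x
    by_cases hx : x ∈ closure {x | 0 < u x}
    · exact hsub hx
    · have hev : B =ᶠ[nhds x] (fun _ => (0 : ℝ)) := by
        filter_upwards [isClosed_closure.isOpen_compl.mem_nhds hx] with y hy
        apply hB0
        by_contra hc
        exact hy (subset_closure (not_le.1 hc))
      rw [hev.iteratedDeriv_eq k, iteratedDeriv_fun_const_zero, abs_zero]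
      positivity
  have hK : 0 < 1 - kap := by linarith [kap_lt]
  set E := expNegInvGlue ((1 - kap) ^ s) with hE
  have hE0 : 0 < E := expNegInvGlue.pos_of_pos (by positivity)
  refine ⟨fun x => E⁻¹ * B x, contDiff_const.mul hB, ?_, ?_, ?_, ?_, ?_, E⁻¹, 2 / ρ,
    1 + 1 / (s : ℝ), by positivity, by positivity, hβ, ?_⟩
  · intro x z
    have : u (x + z) = u x := by
      simp only [hu]
      rw [show 2 * π * (x + z) = 2 * π * x + z * (2 * π) by ring, Real.cos_add_int_mul_two_pi]
    simp only [hBdef, this]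
  · intro x
    have := expNegInvGlue.nonneg (u x ^ s)
    positivity
  · intro x
    rw [inv_mul_le_iff₀ hE0, mul_one]
    apply expNegInvGlue.monotone
    apply hodd.strictMono_pow.monotone
    have := Real.cos_le_one (2 * π * x)
    simp only [hu]; linarith
  · simp only [hBdef, hu, mul_zero, Real.cos_zero]
    exact inv_mul_cancel₀ hE0.ne'
  · intro x h1 h2
    suffices h : B x = 0 by simp only [h, mul_zero]
    apply hB0 x
    have hπ := Real.pi_pos
    simp only [hu, kap, sub_nonpos]
    by_cases hx : x ≤ 1 / 2
    · apply Real.cos_le_cos_of_nonneg_of_le_pi (by positivity) (by nlinarith) (by nlinarith)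
    · push Not at hx
      rw [← Real.cos_two_pi_sub (2 * π * x)]
      apply Real.cos_le_cos_of_nonneg_of_le_pi (by positivity) (by nlinarith) (by nlinarith)
  · intro k x
    rw [iteratedDeriv_const_mul_field, abs_mul, abs_of_pos (inv_pos.2 hE0)]
    gcongr
    exact hbd k x

def Wprod {m : ℕ} (u : Fin m → ℝ → ℝ) (e : Fin m → ℕ) : (Fin m → ℝ) → ℝ :=
  fun x => ∏ i, iteratedDeriv (e i) (u i) (x i)

lemma Wprod_contDiff {m : ℕ} (u : Fin m → ℝ → ℝ) (hu : ∀ i, ContDiff ℝ (⊤ : ℕ∞) (u i)) :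
    ContDiff ℝ (⊤ : ℕ∞) (Wprod u 0) := by
  unfold Wprod
  apply contDiff_prod
  intro i _
  simp only [Pi.zero_apply, iteratedDeriv_zero]
  exact (hu i).comp (contDiff_apply ℝ ℝ i)

lemma dDir_Wprod {m : ℕ} (u : Fin m → ℝ → ℝ) (hu : ∀ i, ContDiff ℝ (⊤ : ℕ∞) (u i))
    (j : Fin m) (e : Fin m → ℕ) :
    dDir (Pi.single j 1) (Wprod u e) = Wprod u (e + Pi.single j 1) := by
  funext x
  unfold dDir
  have hd : ∀ i, Differentiable ℝ (iteratedDeriv (e i) (u i)) := fun i =>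
    (hu i).differentiable_iteratedDeriv (e i) (by exact_mod_cast ENat.natCast_lt_top (e i))
  have hW : DifferentiableAt ℝ (Wprod u e) x := by
    unfold Wprod
    have h0 : ∀ i ∈ (Finset.univ : Finset (Fin m)), HasFDerivAt
        (fun y : Fin m → ℝ => iteratedDeriv (e i) (u i) (y i))
        (fderiv ℝ (fun y : Fin m → ℝ => iteratedDeriv (e i) (u i) (y i)) x) x := fun i _ => by
      have h1 : DifferentiableAt ℝ (fun y : Fin m → ℝ => y i) x := differentiableAt_apply i x
      have h2 : DifferentiableAt ℝ (fun y : Fin m → ℝ => iteratedDeriv (e i) (u i) (y i)) x :=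
        DifferentiableAt.comp x (g := iteratedDeriv (e i) (u i)) (hd i (x i)) h1
      exact h2.hasFDerivAt
    exact (HasFDerivAt.finsetProd h0).differentiableAt
  have h1 : HasDerivAt (fun t : ℝ => Wprod u e (x + t • Pi.single j 1))
      (fderiv ℝ (Wprod u e) x (Pi.single j 1)) 0 := hW.hasFDerivAt.hasLineDerivAt _
  have h2 : ∀ t : ℝ, Wprod u e (x + t • Pi.single j 1) =
      iteratedDeriv (e j) (u j) (x j + t) *
        ∏ i ∈ Finset.univ.erase j, iteratedDeriv (e i) (u i) (x i) := by
    intro t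
    unfold Wprod
    rw [← Finset.mul_prod_erase _ _ (Finset.mem_univ j)]
    congr 1
    · simp
    · apply Finset.prod_congr rfl
      intro i hi
      have : i ≠ j := Finset.ne_of_mem_erase hi
      simp [this]
  have h3 : HasDerivAt (fun t : ℝ => iteratedDeriv (e j) (u j) (x j + t) *
        ∏ i ∈ Finset.univ.erase j, iteratedDeriv (e i) (u i) (x i))
      (iteratedDeriv (e j + 1) (u j) (x j) *
        ∏ i ∈ Finset.univ.erase j, iteratedDeriv (e i) (u i) (x i)) 0 := by
    apply HasDerivAt.mul_const
    have := (hd j (x j + 0)).hasDerivAt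
    have h4 := HasDerivAt.comp_const_add (x j) 0 this
    rw [iteratedDeriv_succ]
    simpa using h4
  have h5 : HasDerivAt (fun t : ℝ => Wprod u e (x + t • Pi.single j 1)) _ 0 :=
    h3.congr_of_eventuallyEq (Filter.Eventually.of_forall h2)
  rw [h1.unique h5]
  unfold Wprod
  rw [← Finset.mul_prod_erase Finset.univ _ (Finset.mem_univ j)]
  congr 1
  · simp
  · apply Finset.prod_congr rfl
    intro i hi
    have : i ≠ j := Finset.ne_of_mem_erase hi
    simp [this]

lemma derivAlong_replicate {m : ℕ} (u : Fin m → ℝ → ℝ) (hu : ∀ i, ContDiff ℝ (⊤ : ℕ∞) (u i))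
    (j : Fin m) (r : ℕ) (e : Fin m → ℕ) :
    derivAlong (List.replicate r (Pi.single j 1)) (Wprod u e) = Wprod u (e + Pi.single j r) := by
  induction r with
  | zero => simp [derivAlong]
  | succ r ih =>
    unfold derivAlong at *
    rw [List.replicate_succ, List.foldr_cons, ih, dDir_Wprod u hu, add_assoc, ← Pi.single_add]

lemma derivAlong_flatMap {m : ℕ} (u : Fin m → ℝ → ℝ) (hu : ∀ i, ContDiff ℝ (⊤ : ℕ∞) (u i))
    (k : Fin m → ℕ) (l : List (Fin m)) (e : Fin m → ℕ) :
    derivAlong (l.flatMap fun i => List.replicate (k i) (Pi.single i 1)) (Wprod u e) =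
      Wprod u (e + (l.map fun i => Pi.single i (k i)).sum) := by
  induction l with
  | nil => simp [derivAlong]
  | cons a l ih =>
    have h : derivAlong ((a :: l).flatMap fun i => List.replicate (k i) (Pi.single i 1)) (Wprod u e)
      = derivAlong (List.replicate (k a) (Pi.single a 1))
        (derivAlong (l.flatMap fun i => List.replicate (k i) (Pi.single i 1)) (Wprod u e)) := by
      simp [derivAlong, List.flatMap_cons, List.foldr_append]
    rw [h, ih, derivAlong_replicate u hu, List.map_cons, List.sum_cons]
    congr 1
    abel

lemma derivAlong_Wprod {m : ℕ} (u : Fin m → ℝ → ℝ) (hu : ∀ i, ContDiff ℝ (⊤ : ℕ∞) (u i))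
    (k : Fin m → ℕ) : derivAlong (vecDirs m k) (Wprod u 0) = Wprod u k := by
  unfold vecDirs
  rw [derivAlong_flatMap u hu, zero_add]
  congr 1
  have : ((List.finRange m).map fun i => (Pi.single i (k i) : Fin m → ℕ)).sum =
      ∑ i, (Pi.single i (k i) : Fin m → ℕ) := by
    rw [← List.ofFn_eq_map, List.sum_ofFn]
  rw [this]
  exact Finset.univ_sum_single k

lemma ennreal_tsum_prod (m : ℕ) (a : Fin m → ℕ → ℝ≥0∞) :
    ∑' k : Fin m → ℕ, ∏ i, a i (k i) = ∏ i, ∑' r, a i r := by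
  induction m with
  | zero => simp [tsum_fintype]
  | succ m ih =>
    rw [Fin.prod_univ_succ, ← ih (fun i => a i.succ), ← ENNReal.tsum_mul_right]
    rw [← (Fin.consEquiv (fun _ : Fin (m + 1) => ℕ)).tsum_eq]
    refine (ENNReal.tsum_prod (f := fun (r : ℕ) (k : Fin m → ℕ) =>
      ∏ i, a i ((Fin.consEquiv (fun _ : Fin (m + 1) => ℕ)) (r, k) i))).trans ?_
    apply tsum_congr
    intro r
    rw [← ENNReal.tsum_mul_left]
    apply tsum_congr
    intro k
    simp [Fin.consEquiv, Fin.prod_univ_succ]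

lemma gevrey_prod {m : ℕ} (u : Fin m → ℝ → ℝ) (hu : ∀ i, ContDiff ℝ (⊤ : ℕ∞) (u i))
    (α L : ℝ) (hL : 0 < L) (A : Fin m → ℕ → ℝ) (S : Fin m → ℝ)
    (hA : ∀ i k x, |iteratedDeriv k (u i) x| ≤ A i k)
    (hs : ∀ i, Summable (fun k : ℕ => (L ^ α) ^ k / ((k.factorial : ℝ)) ^ α * A i k))
    (hS : ∀ i, ∑' k : ℕ, (L ^ α) ^ k / ((k.factorial : ℝ)) ^ α * A i k ≤ S i) :
    gevreyNormTor m α L (Wprod u 0) ≤ ENNReal.ofReal (∏ i, S i) := by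
  have hA0 : ∀ i k, 0 ≤ A i k := fun i k => (abs_nonneg _).trans (hA i k 0)
  have hnn : ∀ i k, 0 ≤ (L ^ α) ^ k / ((k.factorial : ℝ)) ^ α * A i k := fun i k => by
    have := hA0 i k
    positivity
  have hS0 : ∀ i, 0 ≤ S i := fun i => (tsum_nonneg (hnn i)).trans (hS i)
  unfold gevreyNormTor
  calc _ ≤ ∑' k : Fin m → ℕ, ∏ i, ENNReal.ofReal
        ((L ^ α) ^ (k i) / (((k i).factorial : ℝ)) ^ α * A i (k i)) := by
        apply ENNReal.tsum_le_tsum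
        intro k
        rw [← ENNReal.ofReal_prod_of_nonneg (fun i _ => hnn i (k i))]
        apply ENNReal.ofReal_le_ofReal
        rw [Finset.prod_mul_distrib, Finset.prod_div_distrib]
        have e1 : L ^ (α * (((∑ i, k i : ℕ)) : ℝ)) = ∏ i, (L ^ α) ^ (k i) := by
          rw [Real.rpow_mul hL.le, Real.rpow_natCast, Finset.prod_pow_eq_pow_sum]
        have e2 : (((∏ i, Nat.factorial (k i) : ℕ)) : ℝ) ^ α =
            ∏ i, (((k i).factorial : ℝ)) ^ α := by
          rw [Nat.cast_prod, Real.finsetProd_rpow _ _ (fun i _ => by positivity)]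
        rw [e1, e2, derivAlong_Wprod u hu]
        apply mul_le_mul_of_nonneg_left _ (by positivity)
        apply Real.iSup_le _ (Finset.prod_nonneg fun i _ => hA0 i (k i))
        intro x
        unfold Wprod
        rw [Finset.abs_prod]
        exact Finset.prod_le_prod (fun i _ => abs_nonneg _) (fun i _ => hA i (k i) (x i))
    _ = ∏ i, ∑' r, ENNReal.ofReal ((L ^ α) ^ r / ((r.factorial : ℝ)) ^ α * A i r) :=
        ennreal_tsum_prod m (fun i r => ENNReal.ofReal
        ((L ^ α) ^ r / ((r.factorial : ℝ)) ^ α * A i r))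
    _ ≤ ∏ i, ENNReal.ofReal (S i) := by
        apply Finset.prod_le_prod' 
        intro i _
        rw [← ENNReal.ofReal_tsum_of_nonneg (hnn i) (hs i)]
        exact ENNReal.ofReal_le_ofReal (hS i)
    _ = _ := by rw [ENNReal.ofReal_prod_of_nonneg (fun i _ => hS0 i)]

/-- The denominators of the Fejér factors. -/
def Dn (n i : ℕ) : ℕ :=
  if i = 0 then 1 else if i = 1 then Nat.nth Nat.Prime (n + 3) * Nat.nth Nat.Prime (n + 4)
    else Nat.nth Nat.Prime (n + 3 + i)

lemma nthp_pos (j : ℕ) : 0 < Nat.nth Nat.Prime j := (Nat.prime_nth_prime j).pos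

lemma nthp_le {i j : ℕ} (h : i ≤ j) : Nat.nth Nat.Prime i ≤ Nat.nth Nat.Prime j :=
  Nat.nth_monotone Nat.infinite_setOfPred_prime h

lemma Dn_pos (n i : ℕ) : 0 < Dn n i := by
  unfold Dn
  split_ifs
  · exact one_pos
  · exact Nat.mul_pos (nthp_pos _) (nthp_pos _)
  · exact nthp_pos _

lemma Dn_dvd (n i : ℕ) (hn : 3 ≤ n) (hi : i < n - 2) :
    Dn n i ∣ ∏ j ∈ Finset.Icc (n + 3) (2 * n), Nat.nth Nat.Prime j := by
  unfold Dn
  split_ifs with h0 h1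
  · exact one_dvd _
  · rw [← Finset.prod_pair (f := fun j => Nat.nth Nat.Prime j) (show n + 3 ≠ n + 4 by omega)]
    apply Finset.prod_dvd_prod_of_subset
    intro j hj
    simp only [Finset.mem_insert, Finset.mem_singleton] at hj
    rw [Finset.mem_Icc]; omega
  · apply Finset.dvd_prod_of_mem
    rw [Finset.mem_Icc]; omega

lemma prod_dvd_of_Dn (n k : ℕ) (hn : 4 ≤ n) (h : ∀ i, 1 ≤ i → i < n - 2 → Dn n i ∣ k) :
    ∏ j ∈ Finset.Icc (n + 3) (2 * n), Nat.nth Nat.Prime j ∣ k := by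
  have hinj : Function.Injective (Nat.nth Nat.Prime) := Nat.nth_injective Nat.infinite_setOfPred_prime
  rw [← Finset.prod_image (g := Nat.nth Nat.Prime) (f := fun x => x) (fun a _ b _ hab => hinj hab)]
  apply Finset.prod_primes_dvd
  · intro a ha
    obtain ⟨j, _, rfl⟩ := Finset.mem_image.1 ha
    exact (Nat.prime_nth_prime j).prime
  · intro a ha
    obtain ⟨j, hj, rfl⟩ := Finset.mem_image.1 ha
    rw [Finset.mem_Icc] at hj
    have h1 := h 1 le_rfl (by omega)
    simp only [Dn, one_ne_zero, if_false, if_true] at h1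
    by_cases hj3 : j = n + 3
    · subst hj3; exact (Dvd.intro _ rfl).trans h1
    by_cases hj4 : j = n + 4
    · subst hj4; exact (Dvd.intro_left _ rfl).trans h1
    have h2 := h (j - (n + 3)) (by omega) (by omega)
    rw [Dn, if_neg (by omega), if_neg (by omega)] at h2
    rwa [show n + 3 + (j - (n + 3)) = j by omega] at h2

lemma nth_six : Nat.nth Nat.Prime 6 = 17 :=
  Nat.nth_count (p := Nat.Prime) (by norm_num : Nat.Prime 17) ▸ by congr 1

/-- The factors of `g`. -/
def ufun (b : ℝ → ℝ) (n : ℕ) (i : Fin (n - 2)) : ℝ → ℝ :=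
  if i.val = 0 then b else fej (Dn n i)

/-- The orbit. -/
def dorb (Θ v : ℝ → ℝ) (n N : ℕ) (t : ℝ) : (Fin (n - 2) → ℝ) × (Fin (n - 2) → ℝ) :=
  (fun i => if i.val = 0 then Θ (t / N) else t / Dn n i,
   fun i => if i.val = 0 then v (t / N) / N else 1 / Dn n i)

lemma dorb_deriv (Θ v : ℝ → ℝ) (n N : ℕ) (hn : 3 ≤ n) (hN : 0 < N)
    (h1 : ∀ τ, HasDerivAt Θ (v τ) τ)
    (h2 : ∀ τ, HasDerivAt v (-(2 * π * Real.sin (2 * π * Θ τ))) τ) (t : ℝ) :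
    HasDerivAt (dorb Θ v n N)
      (pvf (n - 2) ⟨0, by omega⟩ (((N : ℝ) ^ 2)⁻¹) (dorb Θ v n N t)) t := by
  have hN' : (N : ℝ) ≠ 0 := by exact_mod_cast hN.ne'
  have ht : HasDerivAt (fun t : ℝ => t / N) (1 / N) t := (hasDerivAt_id t).div_const _
  unfold dorb pvf
  refine HasDerivAt.prodMk (hasDerivAt_pi.2 fun i => ?_) (hasDerivAt_pi.2 fun i => ?_)
  · by_cases hi : i.val = 0
    · simp only [hi, if_true]
      have h3 := HasDerivAt.comp t (h1 (t / N)) ht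
      exact h3.congr_deriv (by ring)
    · simp only [hi, if_false]
      exact (hasDerivAt_id t).div_const _
  · by_cases hi : i.val = 0
    · have hlt : 0 < n - 2 := by omega
      have hi' : i = ⟨0, hlt⟩ := Fin.ext hi
      subst hi'
      simp only [if_true, Pi.single_eq_same]
      have h3 := (HasDerivAt.comp t (h2 (t / N)) ht).div_const (N : ℝ)
      refine h3.congr_deriv ?_
      field_simp
    · have hi' : i ≠ ⟨0, by omega⟩ := fun h => hi (by rw [h])
      simp only [hi, if_false, Pi.single_eq_of_ne hi']
      exact hasDerivAt_const _ _

lemma exp_sum_bound (m : ℕ) (hm : 1 ≤ m) (c X Z : ℝ) (hc : 1 ≤ c) (hZ : 0 ≤ Z) :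
    ∏ i : Fin m, ((if i.val = 0 then c else 1) * Real.exp (X + if i.val = 1 then Z else 0)) ≤
      c * Real.exp (m * X + Z) := by
  rw [Finset.prod_mul_distrib, ← Real.exp_sum, Finset.sum_add_distrib,
    Fin.prod_univ_eq_prod_range (fun i => if i = 0 then c else 1),
    Fin.sum_univ_eq_sum_range (fun i => if i = 1 then Z else 0), Finset.prod_ite_eq',
    Finset.sum_ite_eq', if_pos (Finset.mem_range.2 (by omega))]
  simp only [Finset.sum_const, Finset.card_univ, Fintype.card_fin, nsmul_eq_mul]
  gcongr
  split_ifs <;> linarith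

/-- Proposition 3.2 of the paper: the coupling data in the Gevrey case.  Here
`N_n = p_{n+3}⋯p_{2n}` is a product of consecutive primes, `G_n` is the time-one map of
`½(I₂²+⋯+I_{n−1}²) + N_n^{−2}V(θ₂)` on `𝔸^{n−2}` with `V(θ) = −cos(2πθ)`, and with
`M_n = 2⌊c₁N_n exp(c₂(n−2)p_{2n}^{1/α})⌋`, `q_n = N_nM_n`, there are a `G^{α,L₁}` function
`g_n` of the angle variables and a `q_n`-periodic point `a_n` of `G_n` satisfying the
synchronization conditions and the estimate `q_n^{−1}|g_n|_{α,L₁} ≤ N_n^{−2}`. -/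
theorem gevrey_coupling_data (α L₁ : ℝ) (hα : 1 < α) (hL₁ : 0 < L₁) :
    ∃ c₁ c₂ : ℝ, 0 < c₁ ∧ 0 < c₂ ∧
      ∀ n : ℕ, ∀ _hn : 3 ≤ n,
      ∀ N : ℕ, N = ∏ j ∈ Finset.Icc (n + 3) (2 * n), Nat.nth Nat.Prime j →
      ∀ M : ℕ,
        M = 2 * ⌊c₁ * N * Real.exp (c₂ * ((n : ℝ) - 2) *
          ((Nat.nth Nat.Prime (2 * n) : ℝ) ^ (1 / α)))⌋₊ →
      ∀ q : ℕ, q = N * M →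
        ∃ g : (Fin (n - 2) → ℝ) → ℝ, ∃ a : Ann (n - 2),
          ContDiff ℝ (⊤ : ℕ∞) g ∧
          (∀ x : Fin (n - 2) → ℝ, ∀ i : Fin (n - 2), g (x + Pi.single i 1) = g x) ∧
          gevreyNormTor (n - 2) α L₁ g ≠ ⊤ ∧
          (∃ Φ : ℝ → Ann (n - 2) → Ann (n - 2),
            IsHamFlow (n - 2)
              (fun z => (1 / 2) * (∑ i, (z.2 i) ^ 2) +
                ((N : ℝ) ^ 2)⁻¹ * (-cosC (z.1 ⟨0, by omega⟩))) Φ) ∧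
          (∀ Φ : ℝ → Ann (n - 2) → Ann (n - 2),
            IsHamFlow (n - 2)
              (fun z => (1 / 2) * (∑ i, (z.2 i) ^ 2) +
                ((N : ℝ) ^ 2)⁻¹ * (-cosC (z.1 ⟨0, by omega⟩))) Φ →
            (Φ 1)^[q] a = a ∧
            (∀ y : Fin (n - 2) → ℝ, projVec (n - 2) y = a.1 → g y = 1) ∧
            (∀ y : Fin (n - 2) → ℝ, projVec (n - 2) y = a.1 → fderiv ℝ g y = 0) ∧
            (∀ k : ℕ, 1 ≤ k → k ≤ q - 1 →
              (∀ y : Fin (n - 2) → ℝ, projVec (n - 2) y = ((Φ 1)^[k] a).1 → g y = 0) ∧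
              (∀ y : Fin (n - 2) → ℝ, projVec (n - 2) y = ((Φ 1)^[k] a).1 →
                fderiv ℝ g y = 0))) ∧
          (q : ℝ)⁻¹ * (gevreyNormTor (n - 2) α L₁ g).toReal ≤ (((N : ℝ)) ^ 2)⁻¹ := by
  obtain ⟨C, hC, hprime⟩ := gcd_prime_bound α hα
  obtain ⟨b, hbs, hbper, hb0, hb1, hb00, hbv, c, R, β, hc, hR, hβ, hbd⟩ := bump_exists α hα
  have hbsum := bump_sum α L₁ R β c hL₁ hR hβ
  set B0 := ∑' k : ℕ, (L₁ ^ α) ^ k / ((k.factorial : ℝ)) ^ α * (c * (R ^ k * (k.factorial : ℝ) ^ β))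
    with hB0
  set c₁ := max 1 B0 with hc₁
  have hc₁1 : 1 ≤ c₁ := le_max_left _ _
  have hπ := Real.pi_pos
  set K := α * (L₁ * (2 * π)) with hK
  have hK0 : 0 < K := by positivity
  refine ⟨c₁, K * (1 + 3 * C), by linarith, by positivity, ?_⟩
  intro n hn N hN M hM q hq
  set P := Nat.nth Nat.Prime (2 * n) with hP
  set Q := (P : ℝ) ^ (1 / α) with hQ
  have hP1 : (1 : ℝ) ≤ P := by exact_mod_cast nthp_pos (2 * n)
  have hα0 : 0 < α := by linarith
  have hQ1 : 1 ≤ Q := Real.one_le_rpow hP1 (by positivity)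
  have hnR : (3 : ℝ) ≤ n := by exact_mod_cast hn
  have hcast : ((n - 2 : ℕ) : ℝ) = (n : ℝ) - 2 := by
    rw [Nat.cast_sub (by omega)]; norm_num
  have hN0 : 0 < N := by
    rw [hN]; exact Finset.prod_pos fun j _ => nthp_pos j
  have hNR : (1 : ℝ) ≤ N := by exact_mod_cast hN0
  have hDN : ∀ i, i < n - 2 → Dn n i ∣ N := fun i hi => hN ▸ Dn_dvd n i hn hi
  -- the integer M
  set E := Real.exp (K * (1 + 3 * C) * ((n : ℝ) - 2) * Q) with hE
  have hE1 : 1 ≤ E := by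
    apply Real.one_le_exp
    have : 0 ≤ (n : ℝ) - 2 := by linarith
    positivity
  have hy1 : 1 ≤ c₁ * N * E := by
    have := one_le_mul_of_one_le_of_one_le hc₁1 hNR
    exact one_le_mul_of_one_le_of_one_le this hE1
  have hfl : 1 ≤ ⌊c₁ * N * E⌋₊ := Nat.one_le_floor_iff _ |>.2 hy1
  have hM2 : 2 ≤ M := by omega
  have hMy : c₁ * N * E ≤ M := by
    have h1 := (Nat.lt_floor_add_one (c₁ * N * E)).le
    have h2 : ((⌊c₁ * N * E⌋₊ : ℝ) + 1) ≤ M := by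
      exact_mod_cast (by omega : ⌊c₁ * N * E⌋₊ + 1 ≤ M)
    linarith
  have hMR : (1 : ℝ) ≤ M := by exact_mod_cast (by omega : 1 ≤ M)
  obtain ⟨Θ, v, hΘ0, hΘT, hvT, hΘd, hvd, hΘr⟩ := pendulum_orbit M hMR
  set d := dorb Θ v n N with hd
  have hdd := dorb_deriv Θ v n N hn hN0 hΘd hvd
  set u := ufun b n with hu
  have hus : ∀ i, ContDiff ℝ (⊤ : ℕ∞) (u i) := by
    intro i; simp only [hu, ufun]; split_ifs
    · exact hbs
    · exact fej_contDiff _ _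
  have huper : ∀ i x, ∀ z : ℤ, u i (x + z) = u i x := by
    intro i x z; simp only [hu, ufun]; split_ifs
    · exact hbper x z
    · exact fej_add_int _ x z
  have hu0 : ∀ i x, 0 ≤ u i x := by
    intro i x; simp only [hu, ufun]; split_ifs
    · exact hb0 x
    · exact fej_nonneg _ x
  have hu1 : ∀ i x, u i x ≤ 1 := by
    intro i x; simp only [hu, ufun]; split_ifs
    · exact hb1 x
    · exact fej_le_one _ (Dn_pos n i) x
  set g := Wprod u 0 with hg
  have hgv : ∀ x, g x = ∏ i, u i (x i) := by
    intro x; simp [hg, Wprod]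
  have hg0 : ∀ x, 0 ≤ g x := fun x => by
    rw [hgv]; exact Finset.prod_nonneg fun i _ => hu0 i _
  have hg1 : ∀ x, g x ≤ 1 := fun x => by
    rw [hgv]; exact Finset.prod_le_one (fun i _ => hu0 i _) fun i _ => hu1 i _
  have hder1 : ∀ y, g y = 1 → fderiv ℝ g y = 0 := by
    intro y hy
    apply IsLocalMax.fderiv_eq_zero
    exact Filter.Eventually.of_forall fun x => by rw [hy]; exact hg1 x
  have hder0 : ∀ y, g y = 0 → fderiv ℝ g y = 0 := by
    intro y hy
    apply IsLocalMin.fderiv_eq_zero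
    exact Filter.Eventually.of_forall fun x => by rw [hy]; exact hg0 x
  have hproj : ∀ (y : Fin (n - 2) → ℝ) (t : ℝ), projVec (n - 2) y = (projAnn (n - 2) (d t)).1 →
      ∀ i, u i (y i) = u i ((d t).1 i) := by
    intro y t h i
    have h1 := congrFun h i
    obtain ⟨z, hz⟩ := coe_T1_eq (x := y i) (y := (d t).1 i) h1
    rw [hz, huper]
  -- the norm
  have hnorm : gevreyNormTor (n - 2) α L₁ g ≤ ENNReal.ofReal (c₁ * E) := by
    set X := K * Q with hX
    set Z := K * (3 * C * ((n : ℝ) - 2) * Q) with hZ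
    have hZ0 : 0 ≤ Z := by
      have : 0 ≤ (n : ℝ) - 2 := by linarith
      positivity
    have hX0 : 0 ≤ X := by positivity
    set S : Fin (n - 2) → ℝ := fun i =>
      (if i.val = 0 then c₁ else 1) * Real.exp (X + if i.val = 1 then Z else 0) with hS
    set A : Fin (n - 2) → ℕ → ℝ := fun i k => if i.val = 0 then c * (R ^ k * (k.factorial : ℝ) ^ β)
      else (2 * π * Dn n i) ^ k with hA
    have h2π : 1 ≤ 2 * π := by linarith [Real.pi_gt_three]
    have hfej : ∀ i : Fin (n - 2), Real.exp (α * (L₁ * (2 * π * Dn n i) ^ (1 / α))) ≤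
        Real.exp (X + if i.val = 1 then Z else 0) := by
      intro i
      apply Real.exp_le_exp.2
      have hi1 : 1 / α ≤ 1 := by rw [div_le_one hα0]; exact hα.le
      have e1 : (2 * π * Dn n i) ^ (1 / α) ≤ 2 * π * (Dn n i : ℝ) ^ (1 / α) := by
        rw [Real.mul_rpow (by positivity) (by positivity)]
        gcongr
        calc (2 * π) ^ (1 / α) ≤ (2 * π) ^ (1 : ℝ) := Real.rpow_le_rpow_of_exponent_le h2π hi1
          _ = _ := Real.rpow_one _
      have e2 : (Dn n i : ℝ) ^ (1 / α) ≤ Q + if i.val = 1 then 3 * C * ((n : ℝ) - 2) * Q else 0 := by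
        have hilt := i.2
        by_cases hi : i.val = 1
        · rw [if_pos hi]
          have hD : Dn n i ≤ P * P := by
            rw [hi]
            simp only [Dn, one_ne_zero, if_false, if_true]
            exact Nat.mul_le_mul (nthp_le (by omega)) (nthp_le (by omega))
          have hDR : (Dn n i : ℝ) ≤ P * P := by exact_mod_cast hD
          calc (Dn n i : ℝ) ^ (1 / α) ≤ ((P : ℝ) * P) ^ (1 / α) := by gcongr
            _ = Q * Q := Real.mul_rpow (by positivity) (by positivity)
            _ ≤ (C * n) * Q := by
                gcongr
                exact hprime n hn
            _ ≤ 3 * C * ((n : ℝ) - 2) * Q := by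
                apply mul_le_mul_of_nonneg_right _ (by linarith)
                nlinarith
            _ ≤ _ := by linarith
        · rw [if_neg hi, add_zero]
          have hD : Dn n i ≤ P := by
            unfold Dn
            rw [if_neg hi]
            split_ifs
            · exact nthp_pos _
            · exact nthp_le (by omega)
          have hDR : (Dn n i : ℝ) ≤ P := by exact_mod_cast hD
          exact Real.rpow_le_rpow (by positivity) hDR (by positivity)
      calc α * (L₁ * (2 * π * Dn n i) ^ (1 / α)) ≤ α * (L₁ * (2 * π *
            (Q + if i.val = 1 then 3 * C * ((n : ℝ) - 2) * Q else 0))) := by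
            gcongr
            exact e1.trans (by gcongr)
        _ = X + if i.val = 1 then Z else 0 := by
            split_ifs <;> simp only [hX, hZ, hK] <;> ring
    have hAd : ∀ i k x, |iteratedDeriv k (u i) x| ≤ A i k := by
      intro i k x
      simp only [hA, hu, ufun]
      split_ifs with hi
      · exact hbd k x
      · exact fej_deriv_bound _ (Dn_pos n i) k x
    have hAs : ∀ i, Summable (fun k : ℕ => (L₁ ^ α) ^ k / ((k.factorial : ℝ)) ^ α * A i k) := by
      intro i
      by_cases hi : i.val = 0
      · simp only [hA, hi, if_true]; exact hbsum
      · simp only [hA, hi, if_false]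
        exact (fej_sum α L₁ (2 * π * Dn n i) hα hL₁ (by positivity)).1
    have hAS : ∀ i, ∑' k : ℕ, (L₁ ^ α) ^ k / ((k.factorial : ℝ)) ^ α * A i k ≤ S i := by
      intro i
      by_cases hi : i.val = 0
      · simp only [hA, hS, hi, if_true]
        rw [← hB0, if_neg (by norm_num), add_zero]
        have h1 : 1 ≤ Real.exp X := Real.one_le_exp hX0
        have h2 : B0 ≤ c₁ := le_max_right _ _
        nlinarith
      · simp only [hA, hS, hi, if_false, one_mul]
        exact (fej_sum α L₁ (2 * π * Dn n i) hα hL₁ (by positivity)).2.trans (hfej i)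
    refine (gevrey_prod u hus α L₁ hL₁ A S hAd hAs hAS).trans (ENNReal.ofReal_le_ofReal ?_)
    refine (exp_sum_bound (n - 2) (by omega) c₁ X Z hc₁1 hZ0).trans (le_of_eq ?_)
    rw [hE, hcast, hX, hZ]
    congr 2
    ring
  have hflow : ∀ Φ : ℝ → Ann (n - 2) → Ann (n - 2),
      IsHamFlow (n - 2) (pham (n - 2) ⟨0, by omega⟩ (((N : ℝ) ^ 2)⁻¹)) Φ → ∀ k : ℕ,
      (Φ 1)^[k] (projAnn (n - 2) (d 0)) = projAnn (n - 2) (d k) := fun Φ hΦ k =>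
    pflow_orbit _ _ _ Φ hΦ d hdd k
  have hval1 : ∀ y : Fin (n - 2) → ℝ, projVec (n - 2) y = (projAnn (n - 2) (d 0)).1 → g y = 1 := by
    intro y hy
    rw [hgv]
    apply Finset.prod_eq_one
    intro i _
    rw [hproj y 0 hy i]
    simp only [hu, ufun, hd, dorb, zero_div]
    split_ifs
    · rw [hΘ0]; exact hb00
    · exact fej_zero _ (Dn_pos n i)
  have hval0 : ∀ k : ℕ, 1 ≤ k → k ≤ q - 1 → ∀ y : Fin (n - 2) → ℝ,
      projVec (n - 2) y = (projAnn (n - 2) (d k)).1 → g y = 0 := by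
    intro k hk1 hkq y hy
    have hq0 : 0 < q := by rw [hq]; exact Nat.mul_pos hN0 (by omega)
    rw [hgv]
    by_cases hall : ∀ i, 1 ≤ i → i < n - 2 → Dn n i ∣ k
    · have hτ : 1 / 17 ≤ (k : ℝ) / N ∧ (k : ℝ) / N ≤ M - 1 / 17 := by
        have hNpos : (0 : ℝ) < N := by linarith
        rcases Nat.lt_or_ge n 4 with hn4 | hn4
        · have hn3 : n = 3 := by omega
          have hN17 : N = 17 := by
            rw [hN, hn3]; simp [nth_six]
          have hk17 : (k : ℝ) + 1 ≤ 17 * M := by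
            have : k + 1 ≤ 17 * M := by rw [hN17] at hq; omega
            exact_mod_cast this
          have hk1R : (1 : ℝ) ≤ k := by exact_mod_cast hk1
          rw [hN17]
          push_cast
          constructor
          · linarith
          · linarith
        · have hNk : N ∣ k := hN ▸ prod_dvd_of_Dn n k hn4 hall
          obtain ⟨r, hr⟩ := hNk
          have hr1 : 1 ≤ r := by
            rcases Nat.eq_zero_or_pos r with h | h
            · rw [h] at hr; omega
            · exact h
          have hrM : r + 1 ≤ M := by
            have : N * r < N * M := by rw [← hr, ← hq]; omega
            exact Nat.lt_of_mul_lt_mul_left this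
          have hkr : (k : ℝ) / N = r := by
            rw [hr]; push_cast; field_simp
          have h1 : (1 : ℝ) ≤ r := by exact_mod_cast hr1
          have h2 : (r : ℝ) + 1 ≤ M := by exact_mod_cast hrM
          rw [hkr]
          constructor <;> linarith
      obtain ⟨h1, h2⟩ := hΘr _ hτ.1 hτ.2
      apply Finset.prod_eq_zero (Finset.mem_univ (⟨0, by omega⟩ : Fin (n - 2)))
      rw [hproj y k hy]
      simp only [hu, ufun, hd, dorb, if_true]
      exact hbv _ h1 h2
    · push Not at hall
      obtain ⟨i, hi1, hin, hnd⟩ := hall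
      apply Finset.prod_eq_zero (Finset.mem_univ (⟨i, hin⟩ : Fin (n - 2)))
      rw [hproj y k hy]
      have hi0 : i ≠ 0 := by omega
      simp only [hu, ufun, hd, dorb, hi0, if_false]
      exact fej_root _ (Dn_pos n i) k hnd
  have hper : projAnn (n - 2) (d q) = projAnn (n - 2) (d 0) := by
    have hqN : ((q : ℕ) : ℝ) / N = 0 + M := by
      rw [hq]; push_cast; field_simp; ring
    unfold projAnn
    refine Prod.ext (funext fun i => ?_) (funext fun i => ?_)
    · simp only [hd, dorb]
      by_cases hi : i.val = 0
      · simp only [hi, if_true]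
        rw [hqN, hΘT, zero_div, AddCircle.coe_add, AddCircle.coe_period, add_zero]
      · simp only [hi, if_false]
        obtain ⟨r, hr⟩ := (hDN i i.2).trans (hq ▸ Dvd.intro M rfl : N ∣ q)
        have hDp : (0 : ℝ) < Dn n i := by exact_mod_cast Dn_pos n i
        have : (q : ℝ) / Dn n i = (r : ℝ) := by
          rw [hr]; push_cast; field_simp
        rw [this, zero_div, AddCircle.coe_zero, AddCircle.coe_eq_zero_iff]
        exact ⟨r, by simp⟩
    · simp only [hd, dorb]
      by_cases hi : i.val = 0
      · simp only [hi, if_true]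
        rw [hqN, hvT, zero_div]
      · simp only [hi, if_false]
  refine ⟨g, projAnn (n - 2) (d 0), Wprod_contDiff u hus, ?_, ?_, ?_, ?_, ?_⟩
  · intro x i
    rw [hgv, hgv]
    apply Finset.prod_congr rfl
    intro j _
    by_cases hj : j = i
    · subst hj
      have := huper j (x j) 1
      simpa using this
    · simp [hj]
  · exact ne_top_of_le_ne_top ENNReal.ofReal_ne_top hnorm
  · exact pflow_exists (n - 2) ⟨0, by omega⟩ (((N : ℝ) ^ 2)⁻¹)
  · intro Φ hΦ
    have hfl' := hflow Φ hΦ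
    refine ⟨by rw [hfl', hper], hval1, fun y hy => hder1 y (hval1 y hy), fun k hk1 hkq => ?_⟩
    rw [hfl' k]
    exact ⟨hval0 k hk1 hkq, fun y hy => hder0 y (hval0 k hk1 hkq y hy)⟩
  · have h1 : (gevreyNormTor (n - 2) α L₁ g).toReal ≤ c₁ * E := by
      apply ENNReal.toReal_le_of_le_ofReal (by positivity) hnorm
    have hNpos : (0 : ℝ) < N := by linarith
    have hMpos : (0 : ℝ) < M := by linarith
    rw [hq]
    push_cast
    rw [inv_mul_le_iff₀ (by positivity)]
    refine h1.trans ?_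
    rw [show (N : ℝ) * M * ((N : ℝ) ^ 2)⁻¹ = M / N by field_simp, le_div_iff₀ hNpos]
    linarith
end
end
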